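/- Let A be a standard graded polynomial ring over an infinite field and I a homogeneous almost complete intersection ideal generated by a d-sequence f_1, ..., f_n of degrees d_1 ≤ ... ≤ d_n with f_1, ..., f_{n-1} regular and reg(A/I) < (∑_{l=1}^{n-1} d_l) − n + 1. Then for s ≫ 0 the regularity of powers satisfies reg(A/I^s) = d_n·s + ((∑_{l=1}^{n} d_l) − n − 2d_n); in particular reg(I^s) is a linear function of s with leading coefficient d_n for all s ≥ 2. -/

import Mathlib

open Ideal

/-- A sequence `f 0, …, f (n-1)` is a *d-sequence* in `A` if
`(⟨f_0,…,f_{i-1}⟩ : f_i) ∩ ⟨f_0,…,f_{n-1}⟩ = ⟨f_0,…,f_{i-1}⟩` for every `i`. -/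
def IsDSequence {A : Type*} [CommRing A] {n : ℕ} (f : Fin n → A) : Prop :=
  ∀ i : Fin n,
    (Ideal.span (f '' {j | j < i})).colon (Ideal.span {f i}) ⊓ Ideal.span (Set.range f)
      = Ideal.span (f '' {j | j < i})

/-- A (proper) regular sequence: each `f i` is a nonzerodivisor modulo the previous ones,
and the sequence generates a proper ideal. -/
def IsRegSeq {A : Type*} [CommRing A] {n : ℕ} (f : Fin n → A) : Prop :=
  (∀ i : Fin n, ∀ a : A, a * f i ∈ Ideal.span (f '' {j | j < i}) →
      a ∈ Ideal.span (f '' {j | j < i}))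
  ∧ Ideal.span (Set.range f) ≠ ⊤

/-- Extension of an `ℕ`-graded family of submodules to `ℤ` (zero in negative degrees). -/
def zg {K A : Type*} [Semiring K] [AddCommMonoid A] [Module K A]
    (𝒜 : ℕ → Submodule K A) : ℤ → Submodule K A :=
  fun z => if 0 ≤ z then 𝒜 z.toNat else ⊥

/-- The irrelevant (graded maximal) ideal of a graded algebra. -/
def irrel {K A : Type*} [CommRing K] [CommRing A] [Algebra K A]
    (𝒜 : ℕ → Submodule K A) : Ideal A :=
  Ideal.span (⋃ n : ℕ, ((𝒜 (n + 1) : Submodule K A) : Set A))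

/-- `𝒜` is a standard grading: `𝒜 0 = K·1`, the grading is generated in degree one,
and the degree-one part is finitely generated. -/
def IsStdGraded {K A : Type*} [CommSemiring K] [Semiring A] [Algebra K A]
    (𝒜 : ℕ → Submodule K A) : Prop :=
  𝒜 0 = 1 ∧ (∀ n : ℕ, 𝒜 (n + 1) = 𝒜 1 * 𝒜 n) ∧ (𝒜 1).FG

/-- A minimal graded free resolution of the graded module `M` (graded pieces `ℳ`) over the
`γ`-graded ring `A` (graded pieces `𝒜`, graded maximal ideal `𝔪`):
free modules `ι i →₀ A` with generator degrees `σ i`, differentials `d`, augmentation `ε`,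
which is exact, with graded differentials and augmentation, and minimal
(all differentials land in `𝔪 • F`). -/
structure MinGradedFreeRes (K : Type) [Field K] (A : Type) [CommRing A] [Algebra K A]
    {γ : Type} [AddCommGroup γ] (𝒜 : γ → Submodule K A) (𝔪 : Ideal A)
    (M : Type) [AddCommGroup M] [Module A M] [Module K M]
    (ℳ : γ → Submodule K M) where
  ι : ℕ → Type
  fin : ∀ i, Finite (ι i)
  σ : ∀ i, ι i → γ
  d : ∀ i, (ι (i + 1) →₀ A) →ₗ[A] (ι i →₀ A)
  ε : (ι 0 →₀ A) →ₗ[A] M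
  exact_d : ∀ i, Function.Exact (d (i + 1)) (d i)
  exact_ε : Function.Exact (d 0) ε
  surj : Function.Surjective ε
  graded_d : ∀ (i : ℕ) (j : γ) (f : ι (i + 1) →₀ A),
      (∀ k, f k ∈ 𝒜 (j - σ (i + 1) k)) → ∀ k, (d i f) k ∈ 𝒜 (j - σ i k)
  graded_ε : ∀ (j : γ) (f : ι 0 →₀ A),
      (∀ k, f k ∈ 𝒜 (j - σ 0 k)) → ε f ∈ ℳ j
  minimal : ∀ (i : ℕ) (f : ι (i + 1) →₀ A), d i f ∈ 𝔪 • (⊤ : Submodule A (ι i →₀ A))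

/-- Castelnuovo–Mumford regularity read off from a minimal graded free resolution:
`sup { (degree of a generator of F_i) - i }`. -/
noncomputable def MinGradedFreeRes.reg {K : Type} [Field K] {A : Type} [CommRing A]
    [Algebra K A] {𝒜 : ℤ → Submodule K A} {𝔪 : Ideal A} {M : Type} [AddCommGroup M]
    [Module A M] [Module K M] {ℳ : ℤ → Submodule K M}
    (R : MinGradedFreeRes K A 𝒜 𝔪 M ℳ) : ℤ :=
  sSup {x : ℤ | ∃ (i : ℕ) (k : R.ι i), x = R.σ i k - (i : ℤ)}

/-- The graded pieces of a quotient module `A ⧸ J`. -/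
def quotPieces {K A : Type*} [Field K] [CommRing A] [Algebra K A]
    (𝒜 : ℕ → Submodule K A) (J : Ideal A) : ℤ → Submodule K (A ⧸ J) :=
  fun j => (zg 𝒜 j).map ((J.mkQ).restrictScalars K)


/-- The height of an ideal: the infimum of the heights of primes containing it. -/
noncomputable def idealHeight {A : Type*} [CommRing A] (I : Ideal A) : ℕ∞ :=
  ⨅ (p : PrimeSpectrum A) (_ : I ≤ p.asIdeal), Order.height p

/-- The minimal number of generators of an ideal. -/
noncomputable def minGens {A : Type*} [CommRing A] (I : Ideal A) : ℕ :=
  sInf {k : ℕ | ∃ g : Fin k → A, I = Ideal.span (Set.range g)}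

/-- An ideal is a complete intersection if it is generated by a regular sequence. -/
def IsCompleteIntersectionIdeal {R : Type*} [CommRing R] (Q : Ideal R) : Prop :=
  ∃ (k : ℕ) (g : Fin k → R), Q = Ideal.span (Set.range g) ∧ IsRegSeq g

/-- `I` is an almost complete intersection: `μ(I) = ht(I) + 1` and `I` is locally a
complete intersection at each of its minimal primes. -/
def IsACI {A : Type*} [CommRing A] (I : Ideal A) : Prop :=
  (minGens I : ℕ∞) = idealHeight I + 1 ∧
  ∀ p ∈ I.minimalPrimes, ∀ h : p.IsPrime,
    letI := h
    IsCompleteIntersectionIdeal (I.map (algebraMap A (Localization.AtPrime p)))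

/-!
Write `Jᵢ = ⟨f₁, …, fᵢ⟩`, `J = Jₙ₋₁` and `r = ∑_{l<n} (d_l - 1)`. Then `reg (A/J) = r`, as
`f₁, …, fₙ₋₁` is regular, while `reg (A/I) ≤ r - 1`. The exact sequence
`0 → (A/(J : fₙ))(-dₙ) → A/J → A/I → 0` gives `reg (A/(J : fₙ)) = r - dₙ`. As `J : fₙˢ = J : fₙ` for
a d-sequence, the same sequence for `fₙˢ` gives
`reg (A/(J + Iˢ)) = reg (A/(J + ⟨fₙˢ⟩)) = r + (s - 1) dₙ - 1` for `s ≥ 2`. Finally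
`(Jᵢ + Iˢ) : fᵢ₊₁ = Jᵢ + Iˢ⁻¹`, a consequence of `Jᵢ ∩ Iˢ = Jᵢ Iˢ⁻¹`, so the sequences
`0 → (A/(Jᵢ + Iˢ⁻¹))(-dᵢ₊₁) → A/(Jᵢ + Iˢ) → A/(Jᵢ₊₁ + Iˢ) → 0` carry this value down from
`i = n - 1` to `i = 0`, by induction on `s`.

Regularity is compared along exact sequences without `Tor`: a bound `reg M ≤ t` is witnessed by any
graded free resolution whose `i`-th module is generated in degrees `≤ t + i`, such resolutions pass
along short exact sequences, and a minimal resolution attains the least `t`.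
-/

universe u

section ModuleGrading

variable {A : Type*} [CommRing A] {S : Type*} [SetLike S A] (𝒜 : ℕ → S)

/-- A `ℤ`-grading of the module `M` over the `ℕ`-graded ring `(A, 𝒜)`, encoded by the projections
`proj j` onto the homogeneous components: `x` is homogeneous of degree `j` iff `proj j x = x`. This
encoding passes to submodules, quotients and shifts without any transport of direct sums. -/
structure ModuleGrading (M : Type*) [AddCommGroup M] [Module A M] where
  proj : ℤ → M →+ M
  proj_proj : ∀ i j x, proj i (proj j x) = if i = j then proj j x else 0
  exists_sum_proj : ∀ x, ∃ s : Finset ℤ, ∑ j ∈ s, proj j x = x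
  proj_add_smul : ∀ (i : ℕ) (j : ℤ) (a : A) (x : M),
    a ∈ 𝒜 i → proj (j + i) (a • x) = a • proj j x

variable {𝒜} {M N L : Type*} [AddCommGroup M] [Module A M] [AddCommGroup N] [Module A N]
  [AddCommGroup L] [Module A L] (gM : ModuleGrading 𝒜 M) (gN : ModuleGrading 𝒜 N)
  (gL : ModuleGrading 𝒜 L)

/-- A submodule is stable under the grading if it contains the homogeneous components of all of
its elements. -/
def IsStable (P : Submodule A M) : Prop :=
  ∀ j, ∀ x ∈ P, gM.proj j x ∈ P

/-- A linear map is graded (of degree `0`) if it commutes with the projections. -/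
def IsGradedMap (φ : M →ₗ[A] N) : Prop :=
  ∀ j x, gN.proj j (φ x) = φ (gM.proj j x)

namespace ModuleGrading

@[simp]
theorem proj_proj_self (j : ℤ) (x : M) : gM.proj j (gM.proj j x) = gM.proj j x := by
  rw [gM.proj_proj, if_pos rfl]

theorem proj_smul {i : ℕ} {a : A} (ha : a ∈ 𝒜 i) (j : ℤ) (x : M) :
    gM.proj j (a • x) = a • gM.proj (j - i) x := by
  rw [← gM.proj_add_smul i _ a x ha, sub_add_cancel]

theorem proj_eq_ite_of_sum_eq {s : Finset ℤ} {x : M} (hs : ∑ j ∈ s, gM.proj j x = x) (j : ℤ) :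
    gM.proj j x = if j ∈ s then gM.proj j x else 0 := by
  conv_lhs => rw [← hs, map_sum]
  simp only [gM.proj_proj, Finset.sum_ite_eq]

theorem sum_proj_eq_of_subset {s t : Finset ℤ} {x : M} (hs : ∑ j ∈ s, gM.proj j x = x)
    (hst : s ⊆ t) : ∑ j ∈ t, gM.proj j x = x := by
  conv_rhs => rw [← hs]
  refine (Finset.sum_subset hst fun j _ hj => ?_).symm
  rw [gM.proj_eq_ite_of_sum_eq hs, if_neg hj]

theorem mem_of_forall_proj_mem {P : Submodule A M} {x : M} (hx : ∀ j, gM.proj j x ∈ P) :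
    x ∈ P := by
  obtain ⟨s, hs⟩ := gM.exists_sum_proj x
  exact hs ▸ P.sum_mem fun j _ => hx j

/-- The grading induced on a stable submodule. -/
def restrict (P : Submodule A M) (hP : IsStable gM P) : ModuleGrading 𝒜 P where
  proj j := ((gM.proj j).comp P.toAddSubgroup.subtype).codRestrict P.toAddSubgroup
    fun x => hP j x x.2
  proj_proj i j x := Subtype.ext <| by
    split_ifs with h
    · exact (gM.proj_proj i j x).trans (if_pos h)
    · exact (gM.proj_proj i j x).trans (if_neg h)
  exists_sum_proj x := by
    obtain ⟨s, hs⟩ := gM.exists_sum_proj x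
    exact ⟨s, Subtype.ext ((AddSubmonoidClass.coe_finsetSum _ _).trans hs)⟩
  proj_add_smul i j a x ha := Subtype.ext (gM.proj_add_smul i j a x ha)

/-- The grading induced on the quotient by a stable submodule. -/
def quotient (P : Submodule A M) (hP : IsStable gM P) : ModuleGrading 𝒜 (M ⧸ P) where
  proj j := QuotientAddGroup.map P.toAddSubgroup P.toAddSubgroup (gM.proj j) fun x hx => hP j x hx
  proj_proj i j x := by
    obtain ⟨x, rfl⟩ := P.mkQ_surjective x
    have := congrArg P.mkQ (gM.proj_proj i j x)
    split_ifs at this ⊢ <;> exact this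
  exists_sum_proj x := by
    obtain ⟨x, rfl⟩ := P.mkQ_surjective x
    obtain ⟨s, hs⟩ := gM.exists_sum_proj x
    exact ⟨s, (map_sum P.mkQ _ _).symm.trans (congrArg P.mkQ hs)⟩
  proj_add_smul i j a x ha := by
    obtain ⟨x, rfl⟩ := P.mkQ_surjective x
    exact congrArg P.mkQ (gM.proj_add_smul i j a x ha)

/-- The direct sum of two gradings. -/
def prod : ModuleGrading 𝒜 (M × N) where
  proj j := (gM.proj j).prodMap (gN.proj j)
  proj_proj i j x := by
    have hM := gM.proj_proj i j x.1
    have hN := gN.proj_proj i j x.2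
    split_ifs at hM hN ⊢ <;> exact Prod.ext hM hN
  exists_sum_proj x := by
    obtain ⟨s, hs⟩ := gM.exists_sum_proj x.1
    obtain ⟨t, ht⟩ := gN.exists_sum_proj x.2
    exact ⟨s ∪ t, Prod.ext
      (Prod.fst_sum.trans (gM.sum_proj_eq_of_subset hs Finset.subset_union_left))
      (Prod.snd_sum.trans (gN.sum_proj_eq_of_subset ht Finset.subset_union_right))⟩
  proj_add_smul i j a x ha :=
    Prod.ext (gM.proj_add_smul i j a x.1 ha) (gN.proj_add_smul i j a x.2 ha)

/-- The shifted grading `M(-c)`, in which the element of old degree `j` has degree `j + c`. -/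
def shift (c : ℤ) : ModuleGrading 𝒜 M where
  proj j := gM.proj (j - c)
  proj_proj i j x := by simp only [gM.proj_proj, sub_left_inj]
  exists_sum_proj x := by
    obtain ⟨s, hs⟩ := gM.exists_sum_proj x
    exact ⟨s.map (Equiv.addRight c).toEmbedding, by simpa using hs⟩
  proj_add_smul i j a x ha := by
    rw [add_sub_right_comm, gM.proj_add_smul i _ a x ha]

end ModuleGrading

variable {gM gN gL}

namespace IsGradedMap

theorem id : IsGradedMap gM gM LinearMap.id := fun _ _ => rfl

theorem comp {g : N →ₗ[A] L} {f : M →ₗ[A] N} (hg : IsGradedMap gN gL g)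
    (hf : IsGradedMap gM gN f) : IsGradedMap gM gL (g ∘ₗ f) := fun j x => by
  rw [LinearMap.comp_apply, hg, hf, LinearMap.comp_apply]

theorem shift {f : M →ₗ[A] N} (hf : IsGradedMap gM gN f) (c : ℤ) :
    IsGradedMap (gM.shift c) (gN.shift c) f := fun j => hf (j - c)

theorem ker {f : M →ₗ[A] N} (hf : IsGradedMap gM gN f) : IsStable gM (LinearMap.ker f) :=
  fun j x hx => by rw [LinearMap.mem_ker, ← hf, hx, map_zero]

theorem range {f : M →ₗ[A] N} (hf : IsGradedMap gM gN f) : IsStable gN (LinearMap.range f) := by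
  rintro j _ ⟨y, rfl⟩
  exact ⟨gM.proj j y, (hf j y).symm⟩

theorem subtype {P : Submodule A M} (hP : IsStable gM P) :
    IsGradedMap (gM.restrict P hP) gM P.subtype := fun _ _ => rfl

theorem mkQ {P : Submodule A M} (hP : IsStable gM P) :
    IsGradedMap gM (gM.quotient P hP) P.mkQ := fun _ _ => rfl

theorem codRestrict {f : M →ₗ[A] N} (hf : IsGradedMap gM gN f) {P : Submodule A N}
    (hP : IsStable gN P) (h : ∀ x, f x ∈ P) :
    IsGradedMap gM (gN.restrict P hP) (f.codRestrict P h) :=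
  fun j x => Subtype.ext (hf j x)

theorem of_comp_injective {f : M →ₗ[A] N} {q : L →ₗ[A] M} (hf : IsGradedMap gM gN f)
    (hfq : IsGradedMap gL gN (f ∘ₗ q)) (hinj : Function.Injective f) : IsGradedMap gL gM q :=
  fun j x => hinj (by rw [← hf]; exact hfq j x)

theorem of_comp_surjective {f : M →ₗ[A] N} {q : N →ₗ[A] L} (hf : IsGradedMap gM gN f)
    (hqf : IsGradedMap gM gL (q ∘ₗ f)) (hsurj : Function.Surjective f) :
    IsGradedMap gN gL q := fun j x => by
  obtain ⟨x, rfl⟩ := hsurj x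
  rw [hf]
  exact hqf j x

end IsGradedMap

end ModuleGrading

section FreeModule

variable {A : Type*} [CommRing A] {S : Type*} [SetLike S A] [AddSubmonoidClass S A]
  (𝒜 : ℕ → S) [GradedRing 𝒜]

/-- The degree-`j` component of an element of `A`, for `j : ℤ`. -/
def component (j : ℤ) : A →+ A where
  toFun a := if 0 ≤ j then (DirectSum.decompose 𝒜 a j.toNat : A) else 0
  map_zero' := by simp
  map_add' a b := by
    split_ifs
    · simp [DirectSum.decompose_add]
    · simp

theorem component_natCast (n : ℕ) (a : A) : component 𝒜 n a = DirectSum.decompose 𝒜 a n := by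
  simp [component]

theorem component_of_neg {j : ℤ} (hj : j < 0) (a : A) : component 𝒜 j a = 0 :=
  if_neg hj.not_ge

variable {𝒜} in
theorem component_of_mem {i : ℕ} {a : A} (ha : a ∈ 𝒜 i) (j : ℤ) :
    component 𝒜 j a = if j = i then a else 0 := by
  obtain ⟨n, rfl⟩ | hj := (le_or_gt 0 j).imp_left Int.eq_ofNat_of_zero_le
  · rw [component_natCast, DirectSum.decompose_of_mem 𝒜 ha, DirectSum.coe_of_apply]
    simp only [Nat.cast_inj, eq_comm (a := n)]
    split_ifs <;> rfl
  · rw [component_of_neg 𝒜 hj, if_neg (by lia)]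

theorem component_mem (n : ℕ) (a : A) : component 𝒜 n a ∈ 𝒜 n := by
  rw [component_natCast]
  exact SetLike.coe_mem _

/-- The ring `A` as a graded module over itself. -/
def selfGrading : ModuleGrading 𝒜 A where
  proj := component 𝒜
  proj_proj i j a := by
    obtain ⟨n, rfl⟩ | hj := (le_or_gt 0 j).imp_left Int.eq_ofNat_of_zero_le
    · exact component_of_mem (component_mem 𝒜 n a) i
    · simp [component_of_neg 𝒜 hj]
  exists_sum_proj a := by
    classical
    refine ⟨(DirectSum.decompose 𝒜 a).support.map Nat.castEmbedding, ?_⟩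
    simpa [component_natCast] using DirectSum.sum_support_decompose 𝒜 a
  proj_add_smul i j a x ha := by
    obtain ⟨n, rfl⟩ | hj := (le_or_gt 0 j).imp_left Int.eq_ofNat_of_zero_le
    · rw [← Nat.cast_add, component_natCast, component_natCast, add_comm]
      exact DirectSum.coe_decompose_mul_add_of_left_mem 𝒜 ha
    · rw [component_of_neg 𝒜 hj, smul_zero]
      obtain ⟨n, hn⟩ | hji := (le_or_gt 0 (j + i)).imp_left Int.eq_ofNat_of_zero_le
      · rw [hn, component_natCast]
        exact DirectSum.coe_decompose_mul_of_left_mem_of_not_le 𝒜 ha (by lia)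
      · exact component_of_neg 𝒜 hji _

variable {𝒜} in
theorem isStable_selfGrading_iff {I : Ideal A} :
    IsStable (selfGrading 𝒜) I ↔ I.IsHomogeneous 𝒜 := by
  refine ⟨fun h i a ha => component_natCast 𝒜 i a ▸ h i a ha, fun h j a ha => ?_⟩
  obtain ⟨n, rfl⟩ | hj := (le_or_gt 0 j).imp_left Int.eq_ofNat_of_zero_le
  · exact (component_natCast 𝒜 n a).symm ▸ h n ha
  · exact (component_of_neg 𝒜 hj a).symm ▸ I.zero_mem

/-- The free module with basis `ι`, the basis vector of index `k` having degree `σ k`. -/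
noncomputable def freeGrading {ι : Type*} (σ : ι → ℤ) : ModuleGrading 𝒜 (ι →₀ A) where
  proj j :=
    { toFun x := Finsupp.onFinset x.support (fun k => component 𝒜 (j - σ k) (x k)) fun k hk => by
        contrapose! hk
        rw [Finsupp.notMem_support_iff.mp hk, map_zero]
      map_zero' := by ext; simp
      map_add' x y := by ext; simp }
  proj_proj i j x := by
    ext k
    have := (selfGrading 𝒜).proj_proj (i - σ k) (j - σ k) (x k)
    simp only [sub_left_inj] at this
    split_ifs at this ⊢ <;> exact this
  exists_sum_proj x := by
    classical
    choose s hs using fun k => (selfGrading 𝒜).exists_sum_proj (x k)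
    refine ⟨x.support.biUnion fun k => (s k).map (Equiv.addRight (σ k)).toEmbedding, ?_⟩
    ext k
    rw [Finsupp.finsetSum_apply]
    by_cases hk : k ∈ x.support
    · have := (selfGrading 𝒜).sum_proj_eq_of_subset
        (t := (x.support.biUnion fun k => (s k).map (Equiv.addRight (σ k)).toEmbedding).map
          (Equiv.subRight (σ k)).toEmbedding) (hs k) fun i hi => by
            simp only [Finset.mem_map_equiv, Finset.mem_biUnion]
            exact ⟨k, hk, by simpa using hi⟩
      rwa [Finset.sum_map] at this
    · refine (Finset.sum_eq_zero fun j _ => ?_).trans (Finsupp.notMem_support_iff.mp hk).symm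
      simp [Finsupp.notMem_support_iff.mp hk]
  proj_add_smul i j a x ha := by
    ext k
    have := (selfGrading 𝒜).proj_add_smul i (j - σ k) a (x k) ha
    rwa [← add_sub_right_comm] at this

variable {𝒜} {ι : Type*} {σ : ι → ℤ}

theorem freeGrading_proj_apply (j : ℤ) (x : ι →₀ A) (k : ι) :
    (freeGrading 𝒜 σ).proj j x k = component 𝒜 (j - σ k) (x k) := rfl

theorem freeGrading_proj_single (j : ℤ) (k : ι) (a : A) :
    (freeGrading 𝒜 σ).proj j (Finsupp.single k a)
      = Finsupp.single k (component 𝒜 (j - σ k) a) := by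
  ext l
  rw [freeGrading_proj_apply]
  obtain rfl | h := eq_or_ne k l
  · simp
  · simp [Finsupp.single_eq_of_ne h.symm]

variable {M N : Type*} [AddCommGroup M] [Module A M] [AddCommGroup N] [Module A N]
  {gM : ModuleGrading 𝒜 M} {gN : ModuleGrading 𝒜 N}

theorem ModuleGrading.proj_smul_of_proj_eq {i : ℤ} {x : M} (hx : gM.proj i x = x) (a : A)
    (j : ℤ) : gM.proj j (a • x) = component 𝒜 (j - i) a • x := by
  induction a using DirectSum.Decomposition.inductionOn 𝒜 with
  | zero => simp
  | add a b ha hb => simp only [add_smul, map_add, ha, hb]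
  | @homogeneous l a =>
    rw [gM.proj_smul a.2, component_of_mem a.2, ← hx, gM.proj_proj, hx]
    split_ifs <;> first | lia | simp

namespace IsGradedMap

theorem of_proj_single {φ : (ι →₀ A) →ₗ[A] M}
    (h : ∀ k, gM.proj (σ k) (φ (Finsupp.single k 1)) = φ (Finsupp.single k 1)) :
    IsGradedMap (freeGrading 𝒜 σ) gM φ := by
  intro j x
  have map_single (k : ι) (a : A) : φ (Finsupp.single k a) = a • φ (Finsupp.single k 1) := by
    rw [← map_smul, Finsupp.smul_single_one]
  induction x using Finsupp.induction_linear with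
  | zero => simp
  | add x y hx hy => simp only [map_add, hx, hy]
  | single k a =>
    rw [freeGrading_proj_single, map_single k a, map_single k (component 𝒜 _ a),
      gM.proj_smul_of_proj_eq (h k)]

theorem proj_single {φ : (ι →₀ A) →ₗ[A] M} (h : IsGradedMap (freeGrading 𝒜 σ) gM φ) (k : ι) :
    gM.proj (σ k) (φ (Finsupp.single k 1)) = φ (Finsupp.single k 1) := by
  rw [h, freeGrading_proj_single, sub_self, component_of_mem SetLike.GradedOne.one_mem,
    if_pos Nat.cast_zero.symm]

theorem exists_lift {g : M →ₗ[A] N} (hg : IsGradedMap gM gN g) (hsurj : Function.Surjective g)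
    {φ : (ι →₀ A) →ₗ[A] N} (hφ : IsGradedMap (freeGrading 𝒜 σ) gN φ) :
    ∃ ψ : (ι →₀ A) →ₗ[A] M, IsGradedMap (freeGrading 𝒜 σ) gM ψ ∧ g ∘ₗ ψ = φ := by
  choose r hr using hsurj
  let ψ := Finsupp.linearCombination A fun k => gM.proj (σ k) (r (φ (Finsupp.single k 1)))
  have hψ (k : ι) : ψ (Finsupp.single k 1) = gM.proj (σ k) (r (φ (Finsupp.single k 1))) := by
    simp [ψ]
  refine ⟨ψ, of_proj_single fun k => by rw [hψ, gM.proj_proj_self], ?_⟩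
  ext k
  simp [hψ, ← hg (σ k), hr, hφ.proj_single]

end IsGradedMap

end FreeModule

section ShortExact

variable {A : Type*} [CommRing A] {S : Type*} [SetLike S A] {𝒜 : ℕ → S}
  {M' M M'' : Type*} [AddCommGroup M'] [Module A M'] [AddCommGroup M] [Module A M]
  [AddCommGroup M''] [Module A M'']
  {gM' : ModuleGrading 𝒜 M'} {gM : ModuleGrading 𝒜 M} {gM'' : ModuleGrading 𝒜 M''}

/-- The grading on the kernel of a graded map. -/
abbrev IsGradedMap.kerGrading {φ : M →ₗ[A] M''} (hφ : IsGradedMap gM gM'' φ) :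
    ModuleGrading 𝒜 (LinearMap.ker φ) :=
  gM.restrict (LinearMap.ker φ) hφ.ker

/-- `0 → M' → M → M'' → 0` is a short exact sequence of graded modules. -/
structure IsGradedShortExact (gM' : ModuleGrading 𝒜 M') (gM : ModuleGrading 𝒜 M)
    (gM'' : ModuleGrading 𝒜 M'') (f : M' →ₗ[A] M) (g : M →ₗ[A] M'') : Prop where
  graded_left : IsGradedMap gM' gM f
  graded_right : IsGradedMap gM gM'' g
  injective : Function.Injective f
  surjective : Function.Surjective g
  exact : Function.Exact f g

theorem IsGradedMap.isGradedShortExact_ker {φ : M →ₗ[A] M''} (hφ : IsGradedMap gM gM'' φ)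
    (hsurj : Function.Surjective φ) :
    IsGradedShortExact hφ.kerGrading gM gM'' (LinearMap.ker φ).subtype φ :=
  ⟨.subtype hφ.ker, hφ, Subtype.val_injective, hsurj, φ.exact_subtype_ker_map⟩

theorem isGradedShortExact_inl_snd :
    IsGradedShortExact gM' (gM'.prod gM) gM (LinearMap.inl A M' M) (LinearMap.snd A M' M) :=
  ⟨fun j _ => Prod.ext rfl (map_zero (gM.proj j)), fun _ _ => rfl, LinearMap.inl_injective,
    LinearMap.snd_surjective, .inl_snd⟩

theorem isGradedShortExact_inr_fst :
    IsGradedShortExact gM (gM'.prod gM) gM' (LinearMap.inr A M' M) (LinearMap.fst A M' M) :=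
  ⟨fun j _ => Prod.ext (map_zero (gM'.proj j)) rfl, fun _ _ => rfl, LinearMap.inr_injective,
    LinearMap.fst_surjective, .inr_fst⟩

theorem IsGradedMap.coprod {f : M' →ₗ[A] M''} {g : M →ₗ[A] M''} (hf : IsGradedMap gM' gM'' f)
    (hg : IsGradedMap gM gM'' g) : IsGradedMap (gM'.prod gM) gM'' (f.coprod g) := fun j x => by
  rw [LinearMap.coprod_apply, map_add, hf, hg]
  rfl

namespace IsGradedShortExact

variable {f : M' →ₗ[A] M} {g : M →ₗ[A] M''}

theorem comp_equiv {N : Type*} [AddCommGroup N] [Module A N] {gN : ModuleGrading 𝒜 N}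
    (h : IsGradedShortExact gM' gM gM'' f g) {e : N ≃ₗ[A] M}
    (he : IsGradedMap gN gM e.toLinearMap) :
    IsGradedShortExact gM' gN gM'' (e.symm.toLinearMap ∘ₗ f) (g ∘ₗ e.toLinearMap) where
  graded_left := he.of_comp_injective (by simpa [← LinearMap.comp_assoc] using h.graded_left)
    e.injective
  graded_right := h.graded_right.comp he
  injective := e.symm.injective.comp h.injective
  surjective := h.surjective.comp e.surjective
  exact x := by simp [h.exact (e x), e.symm_apply_eq]

theorem exists_factor {N : Type*} [AddCommGroup N] [Module A N] {gN : ModuleGrading 𝒜 N}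
    (h : IsGradedShortExact gM' gM gM'' f g) {q : N →ₗ[A] M} (hq : IsGradedMap gN gM q)
    (hgq : ∀ x, g (q x) = 0) :
    ∃ r : N →ₗ[A] M', IsGradedMap gN gM' r ∧ ∀ x, f (r x) = q x := by
  let e := LinearEquiv.ofInjective f h.injective
  let r := e.symm.toLinearMap ∘ₗ
    q.codRestrict (LinearMap.range f) fun x => (h.exact (q x)).mp (hgq x)
  have hr (x : N) : f (r x) = q x := congrArg Subtype.val (e.apply_symm_apply _)
  refine ⟨r, h.graded_left.of_comp_injective ?_ h.injective, hr⟩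
  rwa [show f ∘ₗ r = q from LinearMap.ext hr]

theorem exists_ker {P' P P'' : Type*} [AddCommGroup P'] [Module A P'] [AddCommGroup P]
    [Module A P] [AddCommGroup P''] [Module A P''] {gP' : ModuleGrading 𝒜 P'}
    {gP : ModuleGrading 𝒜 P} {gP'' : ModuleGrading 𝒜 P''} {i : P' →ₗ[A] P} {p : P →ₗ[A] P''}
    {φ' : P' →ₗ[A] M'} {φ : P →ₗ[A] M} {φ'' : P'' →ₗ[A] M''}
    (hM : IsGradedShortExact gM' gM gM'' f g) (hP : IsGradedShortExact gP' gP gP'' i p)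
    (hφ' : IsGradedMap gP' gM' φ') (hφ : IsGradedMap gP gM φ) (hφ'' : IsGradedMap gP'' gM'' φ'')
    (hsurj : Function.Surjective φ') (hi : ∀ x, φ (i x) = f (φ' x))
    (hp : ∀ x, φ'' (p x) = g (φ x)) :
    ∃ i₀ p₀, IsGradedShortExact hφ'.kerGrading hφ.kerGrading hφ''.kerGrading i₀ p₀ ∧
      ∀ x, (i₀ x : P) = i x := by
  have hi₀ : ∀ x ∈ LinearMap.ker φ', i x ∈ LinearMap.ker φ := fun x hx => by
    rw [LinearMap.mem_ker, hi, LinearMap.mem_ker.mp hx, map_zero]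
  have hp₀ : ∀ x ∈ LinearMap.ker φ, p x ∈ LinearMap.ker φ'' := fun x hx => by
    rw [LinearMap.mem_ker, hp, LinearMap.mem_ker.mp hx, map_zero]
  refine ⟨i.restrict hi₀, p.restrict hp₀,
    ⟨fun j x => Subtype.ext (hP.graded_left j x), fun j x => Subtype.ext (hP.graded_right j x),
    fun x y hxy => Subtype.ext (hP.injective (congrArg Subtype.val hxy)), ?_, ?_⟩, fun x => rfl⟩
  · rintro ⟨z, hz⟩
    obtain ⟨y, rfl⟩ := hP.surjective z
    obtain ⟨w, hw⟩ := (hM.exact (φ y)).mp (by rw [← hp, hz])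
    obtain ⟨v, rfl⟩ := hsurj w
    refine ⟨⟨y - i v, ?_⟩, Subtype.ext ?_⟩
    · rw [LinearMap.mem_ker, map_sub, hi, hw, sub_self]
    · simp [hP.exact.apply_apply_eq_zero]
  · rintro ⟨y, hy⟩
    constructor
    · intro h
      obtain ⟨x, rfl⟩ := (hP.exact y).mp (congrArg Subtype.val h)
      rw [LinearMap.mem_ker, hi] at hy
      exact ⟨⟨x, hM.injective (hy.trans (map_zero f).symm)⟩, rfl⟩
    · rintro ⟨x, hx⟩
      rw [← hx]
      exact Subtype.ext (hP.exact.apply_apply_eq_zero x)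

theorem surjective_of_surjective {P' P P'' : Type*} [AddCommGroup P'] [Module A P']
    [AddCommGroup P] [Module A P] [AddCommGroup P''] [Module A P''] {i : P' →ₗ[A] P}
    {p : P →ₗ[A] P''} {φ' : P' →ₗ[A] M'} {φ : P →ₗ[A] M} {φ'' : P'' →ₗ[A] M''}
    (hM : IsGradedShortExact gM' gM gM'' f g) (hp_surj : Function.Surjective p)
    (hφ' : Function.Surjective φ') (hφ'' : Function.Surjective φ'')
    (hi : ∀ x, φ (i x) = f (φ' x)) (hp : ∀ x, φ'' (p x) = g (φ x)) :
    Function.Surjective φ := fun y => by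
  obtain ⟨z, hz⟩ := (hφ''.comp hp_surj) (g y)
  obtain ⟨w, hw⟩ := (hM.exact (y - φ z)).mp (by rw [map_sub, ← hp, sub_eq_zero]; exact hz.symm)
  obtain ⟨v, rfl⟩ := hφ' w
  exact ⟨i v + z, by rw [map_add, hi, hw, sub_add_cancel]⟩

end IsGradedShortExact

end ShortExact

section Horseshoe

variable {A : Type*} [CommRing A] {S : Type*} [SetLike S A] [AddSubmonoidClass S A]
  {𝒜 : ℕ → S} [GradedRing 𝒜] {ι' ι'' : Type*} {σ' : ι' → ℤ} {σ'' : ι'' → ℤ}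
  {M' M M'' : Type*} [AddCommGroup M'] [Module A M'] [AddCommGroup M] [Module A M]
  [AddCommGroup M''] [Module A M'']
  {gM' : ModuleGrading 𝒜 M'} {gM : ModuleGrading 𝒜 M} {gM'' : ModuleGrading 𝒜 M''}
  {f : M' →ₗ[A] M} {g : M →ₗ[A] M''}

theorem isGradedMap_sumFinsuppLEquivProdFinsupp :
    IsGradedMap (freeGrading 𝒜 (Sum.elim σ' σ'')) ((freeGrading 𝒜 σ').prod (freeGrading 𝒜 σ''))
      (Finsupp.sumFinsuppLEquivProdFinsupp A).toLinearMap :=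
  fun _ _ => Prod.ext (Finsupp.ext fun _ => rfl) (Finsupp.ext fun _ => rfl)

theorem IsGradedShortExact.exists_horseshoe (h : IsGradedShortExact gM' gM gM'' f g)
    {φ' : (ι' →₀ A) →ₗ[A] M'} (hφ' : IsGradedMap (freeGrading 𝒜 σ') gM' φ')
    (hsurj' : Function.Surjective φ') {φ'' : (ι'' →₀ A) →ₗ[A] M''}
    (hφ'' : IsGradedMap (freeGrading 𝒜 σ'') gM'' φ'') (hsurj'' : Function.Surjective φ'') :
    ∃ (φ : (ι' ⊕ ι'' →₀ A) →ₗ[A] M)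
      (hφ : IsGradedMap (freeGrading 𝒜 (Sum.elim σ' σ'')) gM φ),
      Function.Surjective φ ∧
        ∃ i p, IsGradedShortExact hφ'.kerGrading hφ.kerGrading hφ''.kerGrading i p := by
  have he := isGradedMap_sumFinsuppLEquivProdFinsupp (𝒜 := 𝒜) (σ' := σ') (σ'' := σ'')
  have hfree := isGradedShortExact_inl_snd.comp_equiv he
  obtain ⟨ψ, hψ, rfl⟩ := h.graded_right.exists_lift h.surjective hφ''
  have hφ := ((h.graded_left.comp hφ').coprod hψ).comp he
  have left (x) : ((f ∘ₗ φ').coprod ψ) (LinearMap.inl A _ _ x) = f (φ' x) := by simp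
  have right (x) : (g ∘ₗ ψ) (LinearMap.snd A _ _ x) = g (((f ∘ₗ φ').coprod ψ) x) := by
    simp [h.exact.apply_apply_eq_zero]
  obtain ⟨i, p, hker, -⟩ := h.exists_ker hfree hφ' hφ hφ'' hsurj'
    (fun x => (congrArg _ (LinearEquiv.apply_symm_apply _ _)).trans (left x)) fun x => right _
  refine ⟨_, hφ, ?_, i, p, hker⟩
  exact (h.surjective_of_surjective LinearMap.snd_surjective hsurj' hsurj'' left right).comp
    (LinearEquiv.surjective _)

end Horseshoe

section Regularity

variable {A : Type u} [CommRing A] {S : Type*} [SetLike S A] [AddSubmonoidClass S A]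
  {𝒜 : ℕ → S} [GradedRing 𝒜]

/-- The truncated regularity bound: `M` admits the first `n` steps `F₀, …, F₍ₙ₋₁₎` of a graded free
resolution (not necessarily minimal or finite) in which `Fᵢ` is generated in degrees `≤ t + i`. -/
def RegLEUpTo : ℕ → ℤ → ∀ {M : Type u} [AddCommGroup M] [Module A M], ModuleGrading 𝒜 M → Prop
  | 0, _, _, _, _, _ => True
  | n + 1, t, M, _, _, gM => ∃ (ι : Type u) (σ : ι → ℤ) (φ : (ι →₀ A) →ₗ[A] M)
      (hφ : IsGradedMap (freeGrading 𝒜 σ) gM φ), (∀ k, σ k ≤ t) ∧ Function.Surjective φ ∧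
        RegLEUpTo n (t + 1) hφ.kerGrading

/-- `RegLE t gM` is the bound `reg M ≤ t` on the Castelnuovo–Mumford regularity. The truncated
resolutions for different `n` need not be compatible. -/
def RegLE (t : ℤ) {M : Type u} [AddCommGroup M] [Module A M] (gM : ModuleGrading 𝒜 M) : Prop :=
  ∀ n, RegLEUpTo n t gM

variable {M' M M'' : Type u} [AddCommGroup M'] [Module A M'] [AddCommGroup M] [Module A M]
  [AddCommGroup M''] [Module A M''] {gM' : ModuleGrading 𝒜 M'} {gM : ModuleGrading 𝒜 M}
  {gM'' : ModuleGrading 𝒜 M''} {f : M' →ₗ[A] M} {g : M →ₗ[A] M''} {n : ℕ} {t : ℤ}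

namespace RegLEUpTo

theorem of_shift_equiv {c : ℤ} (e : M ≃ₗ[A] M'')
    (he : IsGradedMap (gM.shift c) gM'' e.toLinearMap) (h : RegLEUpTo n t gM) :
    RegLEUpTo n (t + c) gM'' := by
  induction n generalizing t M M'' with
  | zero => trivial
  | succ n ih =>
    obtain ⟨ι, σ, φ, hφ, hσ, hsurj, hker⟩ := h
    have hid : IsGradedMap ((freeGrading 𝒜 σ).shift c) (freeGrading 𝒜 fun k => σ k + c)
        (LinearEquiv.refl A _).toLinearMap := fun j x => Finsupp.ext fun k =>
      congrArg (fun i => component 𝒜 i (x k)) (by ring)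
    have hφ' : IsGradedMap (freeGrading 𝒜 fun k => σ k + c) gM'' (e.toLinearMap ∘ₗ φ) :=
      hid.of_comp_surjective (he.comp (hφ.shift c)) (LinearEquiv.surjective _)
    refine ⟨ι, _, _, hφ', fun k => by simpa using hσ k, e.surjective.comp hsurj, ?_⟩
    rw [add_right_comm]
    refine ih (LinearEquiv.ofEq _ _ (LinearEquiv.ker_comp e φ).symm) (fun j x => ?_) hker
    exact Subtype.ext (hid j x)

theorem mono {t' : ℤ} (h : RegLEUpTo n t gM) (htt' : t ≤ t') : RegLEUpTo n t' gM := by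
  induction n generalizing t t' M with
  | zero => trivial
  | succ n ih =>
    obtain ⟨ι, σ, φ, hφ, hσ, hsurj, hker⟩ := h
    exact ⟨ι, σ, φ, hφ, fun k => (hσ k).trans htt', hsurj, ih hker (by gcongr)⟩

theorem of_subsingleton [Subsingleton M] : RegLEUpTo n t gM := by
  induction n generalizing t M with
  | zero => trivial
  | succ n ih =>
    exact ⟨PEmpty, PEmpty.elim, 0, fun _ _ => Subsingleton.elim _ _, fun k => k.elim,
      fun _ => ⟨0, Subsingleton.elim _ _⟩, ih⟩

theorem free {ι : Type u} {σ : ι → ℤ} (h : ∀ k, σ k ≤ t) :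
    RegLEUpTo n t (freeGrading 𝒜 σ) := by
  cases n with
  | zero => trivial
  | succ n =>
    have : Subsingleton (LinearMap.ker (LinearMap.id : (ι →₀ A) →ₗ[A] (ι →₀ A))) := by
      rw [LinearMap.ker_id]
      infer_instance
    exact ⟨ι, σ, LinearMap.id, .id, h, Function.surjective_id, of_subsingleton⟩

theorem extension (hs : IsGradedShortExact gM' gM gM'' f g) (h' : RegLEUpTo n t gM')
    (h'' : RegLEUpTo n t gM'') : RegLEUpTo n t gM := by
  induction n generalizing t M' M M'' with
  | zero => trivial
  | succ n ih =>
    obtain ⟨ι', σ', φ', hφ', hσ', hsurj', hker'⟩ := h'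
    obtain ⟨ι'', σ'', φ'', hφ'', hσ'', hsurj'', hker''⟩ := h''
    obtain ⟨φ, hφ, hsurj, i, p, hip⟩ := hs.exists_horseshoe hφ' hsurj' hφ'' hsurj''
    exact ⟨ι' ⊕ ι'', _, φ, hφ, Sum.forall.mpr ⟨hσ', hσ''⟩, hsurj, ih hip hker' hker''⟩

theorem cokernel (hs : IsGradedShortExact gM' gM gM'' f g) (h : RegLEUpTo (n + 1) t gM)
    (h' : RegLEUpTo n (t + 1) gM') : RegLEUpTo (n + 1) t gM'' := by
  obtain ⟨ι, σ, φ, hφ, hσ, hsurj, hker⟩ := h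
  have hgφ := hs.graded_right.comp hφ
  obtain ⟨q, hq, hfq⟩ := hs.exists_factor (hφ.comp (.subtype hgφ.ker)) fun x => x.2
  refine ⟨ι, σ, g ∘ₗ φ, hgφ, hσ, hs.surjective.comp hsurj, ?_⟩
  refine extension (f := Submodule.inclusion (LinearMap.ker_le_ker_comp φ g)) (g := q)
    ⟨fun _ _ => rfl, hq, Submodule.inclusion_injective _, fun y => ?_, fun x => ?_⟩ hker h'
  · obtain ⟨x, hx⟩ := hsurj (f y)
    have hgx : g (φ x) = 0 := by rw [hx, hs.exact.apply_apply_eq_zero]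
    exact ⟨⟨x, hgx⟩, hs.injective ((hfq _).trans hx)⟩
  · rw [← map_eq_zero_iff f hs.injective, hfq]
    exact ⟨fun hx => ⟨⟨x, hx⟩, rfl⟩, fun ⟨y, hy⟩ => hy ▸ y.2⟩

-- `M'` is the quotient of `M' × F''` by `F''`, and `M' × F''` is an extension of `M` by the first
-- syzygy of `M''`, where `F''` is a free cover of `M''`.
theorem kernel (hs : IsGradedShortExact gM' gM gM'' f g) (h : RegLEUpTo n t gM)
    (h'' : RegLEUpTo (n + 1) (t - 1) gM'') : RegLEUpTo n t gM' := by
  cases n with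
  | zero => trivial
  | succ n =>
  obtain ⟨ι, σ, φ, hφ, hσ, hsurj, hker⟩ := h''
  rw [sub_add_cancel] at hker
  obtain ⟨ψ, hψ, rfl⟩ := hs.graded_right.exists_lift hs.surjective hφ
  obtain ⟨q, hq, hfq⟩ := hs.exists_factor (hψ.comp (.subtype hφ.ker)) fun x => x.2
  have hprod : RegLEUpTo (n + 1) t (gM'.prod (freeGrading 𝒜 σ)) := by
    refine extension (f := (-q).prod (LinearMap.ker (g ∘ₗ ψ)).subtype) (g := f.coprod ψ)
      ⟨fun j x => ?_, hs.graded_left.coprod hψ, fun x y hxy => ?_, fun y => ?_, fun x => ?_⟩ hker h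
    · exact Prod.ext ((map_neg _ _).trans (congrArg Neg.neg (hq j x))) rfl
    · exact Subtype.ext (congrArg Prod.snd hxy)
    · obtain ⟨z, hz⟩ := hsurj (g y)
      obtain ⟨w, hw⟩ := (hs.exact (y - ψ z)).mp (by rw [map_sub, ← hz]; exact sub_self _)
      exact ⟨(w, z), by simp [hw]⟩
    · constructor
      · intro hx
        have hgx := congrArg g hx
        simp only [LinearMap.coprod_apply, map_add, hs.exact.apply_apply_eq_zero, zero_add,
          map_zero] at hgx
        refine ⟨⟨x.2, hgx⟩, Prod.ext (hs.injective ?_) rfl⟩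
        exact (map_neg f _).trans ((congrArg Neg.neg (hfq _)).trans
          (eq_neg_of_add_eq_zero_left hx).symm)
      · rintro ⟨z, rfl⟩
        simpa [neg_add_eq_zero] using hfq z
  exact cokernel isGradedShortExact_inr_fst hprod (free fun k => by linarith [hσ k])

end RegLEUpTo

namespace RegLE

theorem mono {t' : ℤ} (h : RegLE t gM) (htt' : t ≤ t') : RegLE t' gM := fun n => (h n).mono htt'

theorem of_shift_equiv {c : ℤ} (e : M ≃ₗ[A] M'')
    (he : IsGradedMap (gM.shift c) gM'' e.toLinearMap) (h : RegLE t gM) : RegLE (t + c) gM'' :=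
  fun n => (h n).of_shift_equiv e he

theorem extension (hs : IsGradedShortExact gM' gM gM'' f g) (h' : RegLE t gM')
    (h'' : RegLE t gM'') : RegLE t gM :=
  fun n => .extension hs (h' n) (h'' n)

theorem cokernel (hs : IsGradedShortExact gM' gM gM'' f g) (h : RegLE t gM)
    (h' : RegLE (t + 1) gM') : RegLE t gM'' := fun
  | 0 => trivial
  | n + 1 => .cokernel hs (h (n + 1)) (h' n)

theorem kernel (hs : IsGradedShortExact gM' gM gM'' f g) (h : RegLE t gM)
    (h'' : RegLE (t - 1) gM'') : RegLE t gM' :=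
  fun n => .kernel hs (h n) (h'' (n + 1))

theorem of_shift {c : ℤ} (h : RegLE t (gM.shift c)) : RegLE (t - c) gM := by
  refine h.of_shift_equiv (c := -c) (LinearEquiv.refl A M) fun j x => ?_
  exact congrArg (fun i => gM.proj i x) (by ring)

theorem shift {c : ℤ} (h : RegLE (t - c) gM) : RegLE t (gM.shift c) := by
  simpa using h.of_shift_equiv (c := c) (gM'' := gM.shift c) (LinearEquiv.refl A M) .id

end RegLE

end Regularity

section QuotientRegularity

variable {A : Type u} [CommRing A] {S : Type*} [SetLike S A] [AddSubmonoidClass S A]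
  {𝒜 : ℕ → S} [GradedRing 𝒜] {I : Ideal A} {t : ℤ}

/-- The grading on the quotient by a homogeneous ideal. -/
abbrev quotGrading (hI : I.IsHomogeneous 𝒜) : ModuleGrading 𝒜 (A ⧸ I) :=
  (selfGrading 𝒜).quotient I (isStable_selfGrading_iff.mpr hI)

variable (𝒜) in
/-- `I` is homogeneous and `reg (A ⧸ I) ≤ t`. -/
def QuotRegLE (t : ℤ) (I : Ideal A) : Prop :=
  ∃ hI : I.IsHomogeneous 𝒜, RegLE t (quotGrading hI)

variable (𝒜) in
/-- `I` is homogeneous and `reg (A ⧸ I) = r`. -/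
def HasQuotReg (r : ℤ) (I : Ideal A) : Prop :=
  QuotRegLE 𝒜 r I ∧ ¬ QuotRegLE 𝒜 (r - 1) I

theorem QuotRegLE.mono {t' : ℤ} (h : QuotRegLE 𝒜 t I) (htt' : t ≤ t') : QuotRegLE 𝒜 t' I :=
  ⟨h.1, h.2.mono htt'⟩

theorem quotRegLE_top : QuotRegLE 𝒜 t ⊤ := by
  refine ⟨Ideal.IsHomogeneous.top 𝒜, fun n => ?_⟩
  have : Subsingleton (A ⧸ (⊤ : Ideal A)) := Submodule.Quotient.subsingleton_iff.mpr rfl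
  exact .of_subsingleton

theorem quotRegLE_zero_bot : QuotRegLE 𝒜 0 (⊥ : Ideal A) := by
  refine ⟨Ideal.IsHomogeneous.bot 𝒜, fun n => ?_⟩
  have h : RegLEUpTo n 0 (freeGrading 𝒜 fun _ : PUnit.{u + 1} => 0) := .free fun _ => le_rfl
  let e : (PUnit.{u + 1} →₀ A) ≃ₗ[A] A ⧸ (⊥ : Ideal A) :=
    (Finsupp.uniqueLinearEquiv A A PUnit.unit).trans (Submodule.quotEquivOfEqBot ⊥ rfl).symm
  refine h.of_shift_equiv (c := 0) e fun j x => ?_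
  change Submodule.mkQ ⊥ (component 𝒜 j (x PUnit.unit))
    = Submodule.mkQ ⊥ (component 𝒜 (j - 0 - 0) (x PUnit.unit))
  rw [sub_zero, sub_zero]

theorem eq_top_of_quotRegLE_of_neg (h : QuotRegLE 𝒜 t I) (ht : t < 0) : I = ⊤ := by
  obtain ⟨hI, h⟩ := h
  obtain ⟨ι, σ, φ, hφ, hσ, hsurj, -⟩ := h 1
  have hφ0 : φ = 0 := by
    ext k
    obtain ⟨y, hy⟩ := I.mkQ_surjective (φ (Finsupp.single k 1))
    simp only [LinearMap.comp_apply, Finsupp.lsingle_apply, LinearMap.zero_apply]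
    rw [← hφ.proj_single, ← hy]
    exact (congrArg I.mkQ (component_of_neg 𝒜 ((hσ k).trans_lt ht) y)).trans (map_zero _)
  obtain ⟨x, hx⟩ := hsurj (I.mkQ 1)
  rw [hφ0, LinearMap.zero_apply] at hx
  exact (Ideal.eq_top_iff_one I).mpr ((Submodule.Quotient.mk_eq_zero I).mp hx.symm)

theorem hasQuotReg_zero_bot [Nontrivial A] : HasQuotReg 𝒜 0 (⊥ : Ideal A) :=
  ⟨quotRegLE_zero_bot, fun h => bot_ne_top (eq_top_of_quotRegLE_of_neg h (by lia))⟩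

variable {e : ℕ} {g : A}

theorem isHomogeneous_span_singleton (hg : g ∈ 𝒜 e) : (Ideal.span {g}).IsHomogeneous 𝒜 :=
  Ideal.homogeneous_span 𝒜 _ fun _ hx => ⟨e, Set.mem_singleton_iff.mp hx ▸ hg⟩

theorem isHomogeneous_span_range {ι : Type*} {f : ι → A} {d : ι → ℕ} (hf : ∀ l, f l ∈ 𝒜 (d l)) :
    (Ideal.span (Set.range f)).IsHomogeneous 𝒜 :=
  Ideal.homogeneous_span 𝒜 _ (Set.forall_mem_range.mpr fun l => ⟨d l, hf l⟩)

theorem isHomogeneous_pow (hI : I.IsHomogeneous 𝒜) (s : ℕ) : (I ^ s).IsHomogeneous 𝒜 := by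
  induction s with
  | zero => simpa using Ideal.IsHomogeneous.top 𝒜
  | succ s ih => exact pow_succ I s ▸ ih.mul hI

theorem isHomogeneous_colon_singleton (hI : I.IsHomogeneous 𝒜) (hg : g ∈ 𝒜 e) :
    (I.colon {g}).IsHomogeneous 𝒜 := by
  intro i a ha
  rw [Submodule.mem_colon_singleton, smul_eq_mul] at ha ⊢
  rw [← DirectSum.coe_decompose_mul_add_of_right_mem 𝒜 hg]
  exact hI _ ha

-- `0 → (A ⧸ (I : g))(-e) → A ⧸ I → A ⧸ (I + g) → 0`
theorem exists_isGradedShortExact_colon {J : Ideal A} (hJ : I.colon {g} = J)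
    (hI : I.IsHomogeneous 𝒜) (hg : g ∈ 𝒜 e) :
    ∃ α β, IsGradedShortExact
      ((quotGrading (hJ ▸ isHomogeneous_colon_singleton hI hg : J.IsHomogeneous 𝒜)).shift e)
      (quotGrading hI) (quotGrading (hI.sup (isHomogeneous_span_singleton hg))) α β ∧
        ∀ a, α (J.mkQ a) = I.mkQ (g * a) := by
  have mem_iff (a : A) : a ∈ J ↔ LinearMap.mulLeft A g a ∈ I := by
    rw [← hJ, Submodule.mem_colon_singleton, smul_eq_mul, mul_comm, LinearMap.mulLeft_apply]
  refine ⟨J.mapQ I (LinearMap.mulLeft A g) fun a => (mem_iff a).mp,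
    Submodule.factor le_sup_left, ⟨fun j x => ?_, fun j x => ?_, ?_,
    Submodule.factor_surjective _, fun x => ?_⟩, fun a => rfl⟩
  · obtain ⟨x, rfl⟩ := J.mkQ_surjective x
    exact congrArg I.mkQ ((selfGrading 𝒜).proj_smul hg j x)
  · obtain ⟨x, rfl⟩ := I.mkQ_surjective x
    rfl
  · rw [← LinearMap.ker_eq_bot, LinearMap.ker_eq_bot']
    intro x hx
    obtain ⟨x, rfl⟩ := J.mkQ_surjective x
    exact (Submodule.Quotient.mk_eq_zero J).mpr
      ((mem_iff x).mpr ((Submodule.Quotient.mk_eq_zero I).mp hx))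
  · obtain ⟨x, rfl⟩ := I.mkQ_surjective x
    refine (Submodule.Quotient.mk_eq_zero _).trans ⟨fun hx => ?_, ?_⟩
    · obtain ⟨a, ha, b, hb, rfl⟩ := Submodule.mem_sup.mp hx
      obtain ⟨c, rfl⟩ := Ideal.mem_span_singleton.mp hb
      exact ⟨J.mkQ c, (Ideal.Quotient.eq (I := I)).mpr (by simpa using ha)⟩
    · rintro ⟨y, hy⟩
      obtain ⟨y, rfl⟩ := J.mkQ_surjective y
      have hmem : x - g * y ∈ I := (Ideal.Quotient.eq (I := I)).mp hy.symm
      rw [← sub_add_cancel x (g * y)]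
      exact add_mem (Ideal.mem_sup_left hmem)
        (Ideal.mem_sup_right (Ideal.mul_mem_right _ _ (Ideal.mem_span_singleton_self g)))

theorem QuotRegLE.of_colon_of_sup (hI : I.IsHomogeneous 𝒜) (hg : g ∈ 𝒜 e)
    (hcolon : QuotRegLE 𝒜 (t - e) (I.colon {g})) (hsup : QuotRegLE 𝒜 t (I ⊔ Ideal.span {g})) :
    QuotRegLE 𝒜 t I := by
  obtain ⟨α, β, hs, -⟩ := exists_isGradedShortExact_colon rfl hI hg
  exact ⟨hI, .extension hs hcolon.2.shift hsup.2⟩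

theorem QuotRegLE.sup_span_singleton (hI : QuotRegLE 𝒜 t I) (hg : g ∈ 𝒜 e)
    (hcolon : QuotRegLE 𝒜 (t + 1 - e) (I.colon {g})) : QuotRegLE 𝒜 t (I ⊔ Ideal.span {g}) := by
  obtain ⟨α, β, hs, -⟩ := exists_isGradedShortExact_colon rfl hI.1 hg
  exact ⟨_, .cokernel hs hI.2 hcolon.2.shift⟩

theorem QuotRegLE.colon_singleton (hI : QuotRegLE 𝒜 t I) (hg : g ∈ 𝒜 e)
    (hsup : QuotRegLE 𝒜 (t - 1) (I ⊔ Ideal.span {g})) : QuotRegLE 𝒜 (t - e) (I.colon {g}) := by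
  obtain ⟨α, β, hs, -⟩ := exists_isGradedShortExact_colon rfl hI.1 hg
  exact ⟨_, (RegLE.kernel hs hI.2 hsup.2).of_shift⟩

theorem HasQuotReg.colon_singleton (hI : HasQuotReg 𝒜 t I) (hg : g ∈ 𝒜 e)
    (hsup : QuotRegLE 𝒜 (t - 1) (I ⊔ Ideal.span {g})) : HasQuotReg 𝒜 (t - e) (I.colon {g}) :=
  ⟨hI.1.colon_singleton hg hsup, fun h =>
    hI.2 (.of_colon_of_sup hI.1.1 hg (h.mono (by lia)) hsup)⟩

theorem HasQuotReg.sup_span_singleton (hcolon : HasQuotReg 𝒜 (t + 1 - e) (I.colon {g}))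
    (hg : g ∈ 𝒜 e) (hI : QuotRegLE 𝒜 t I) : HasQuotReg 𝒜 t (I ⊔ Ideal.span {g}) :=
  ⟨hI.sup_span_singleton hg hcolon.1, fun h =>
    hcolon.2 ((hI.colon_singleton hg h).mono (by lia))⟩

theorem HasQuotReg.of_sup_span_singleton (hsup : HasQuotReg 𝒜 t (I ⊔ Ideal.span {g}))
    (hg : g ∈ 𝒜 e) (hI : I.IsHomogeneous 𝒜) (hcolon : QuotRegLE 𝒜 (t - e) (I.colon {g})) :
    HasQuotReg 𝒜 t I :=
  ⟨.of_colon_of_sup hI hg hcolon hsup.1, fun h =>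
    hsup.2 (h.sup_span_singleton hg (hcolon.mono (by lia)))⟩

/-- The ideal `⟨f 0, …, f (i - 1)⟩`. -/
def partialIdeal {n : ℕ} (f : Fin n → A) (i : ℕ) : Ideal A :=
  Ideal.span (f '' {j | (j : ℕ) < i})

section partialIdeal

variable {n : ℕ}

theorem partialIdeal_zero (f : Fin n → A) : partialIdeal f 0 = ⊥ := by
  simp [partialIdeal]

theorem partialIdeal_succ (f : Fin n → A) (i : Fin n) :
    partialIdeal f (i + 1) = partialIdeal f i ⊔ Ideal.span {f i} := by
  have : {j : Fin n | (j : ℕ) < i + 1} = ({j : Fin n | (j : ℕ) < i} ∪ {i} : Set (Fin n)) := by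
    ext j
    simp [le_iff_eq_or_lt, Fin.ext_iff]
  rw [partialIdeal, this, Set.image_union, Set.image_singleton, Ideal.span_union, partialIdeal]

theorem partialIdeal_self (f : Fin n → A) : partialIdeal f n = Ideal.span (Set.range f) := by
  simp [partialIdeal]

theorem partialIdeal_comp_castSucc (f : Fin (n + 1) → A) {i : ℕ} (hi : i ≤ n) :
    partialIdeal (f ∘ Fin.castSucc) i = partialIdeal f i := by
  have : {j : Fin (n + 1) | (j : ℕ) < i} = Fin.castSucc '' {j | (j : ℕ) < i} := by
    ext j
    refine ⟨fun hj => ⟨j.castLT (lt_of_lt_of_le hj hi), hj, rfl⟩, ?_⟩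
    rintro ⟨k, hk, rfl⟩
    exact hk
  rw [partialIdeal, partialIdeal, this, ← Set.image_comp]

theorem isHomogeneous_partialIdeal {f : Fin n → A} {d : Fin n → ℕ} (hf : ∀ l, f l ∈ 𝒜 (d l))
    (i : ℕ) : (partialIdeal f i).IsHomogeneous 𝒜 := by
  rw [partialIdeal, Set.image_eq_range]
  exact isHomogeneous_span_range fun l => hf l

theorem IsRegSeq.comp_castSucc {f : Fin (n + 1) → A} (hf : IsRegSeq f) :
    IsRegSeq (f ∘ Fin.castSucc) := by
  refine ⟨fun i a ha => ?_,
    ne_top_of_le_ne_top hf.2 (Ideal.span_mono (Set.range_comp_subset_range _ _))⟩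
  have : partialIdeal (f ∘ Fin.castSucc) i = partialIdeal f i.castSucc :=
    partialIdeal_comp_castSucc f i.2.le
  exact this.ge (hf.1 i.castSucc a (this.le ha))

theorem IsRegSeq.colon_partialIdeal {f : Fin n → A} (hf : IsRegSeq f) (i : Fin n) :
    (partialIdeal f i).colon {f i} = partialIdeal f i :=
  le_antisymm (fun a ha => hf.1 i a (Submodule.mem_colon_singleton.mp ha)) Ideal.le_colon

theorem IsRegSeq.hasQuotReg {f : Fin n → A} {d : Fin n → ℕ} (hreg : IsRegSeq f)
    (hf : ∀ l, f l ∈ 𝒜 (d l)) (hd : ∀ l, 1 ≤ d l) :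
    HasQuotReg 𝒜 (∑ l, ((d l : ℤ) - 1)) (Ideal.span (Set.range f)) := by
  rw [← partialIdeal_self]
  induction n with
  | zero =>
    have := (Submodule.nontrivial_iff A).mp ⟨_, _, hreg.2⟩
    simpa [partialIdeal_zero] using hasQuotReg_zero_bot
  | succ n ih =>
    have hJ := partialIdeal_comp_castSucc f le_rfl ▸
      ih hreg.comp_castSucc (fun l => hf l.castSucc) fun l => hd l.castSucc
    have hcolon := hreg.colon_partialIdeal (Fin.last n)
    have hlast := hd (Fin.last n)
    have hsucc := partialIdeal_succ f (Fin.last n)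
    rw [Fin.val_last] at hcolon hsucc
    rw [Fin.sum_univ_castSucc, hsucc]
    refine HasQuotReg.sup_span_singleton ?_ (hf _) (hJ.1.mono (by lia))
    rw [hcolon]
    convert hJ using 1
    ring

end partialIdeal

end QuotientRegularity

section Nonzerodivisor

variable {A : Type u} [CommRing A] {S : Type*} [SetLike S A]

section VanishesBelow

variable {𝒜 : ℕ → S} {M N : Type*} [AddCommGroup M] [Module A M] [AddCommGroup N] [Module A N]
  {gM : ModuleGrading 𝒜 M} {gN : ModuleGrading 𝒜 N} {b : ℤ}

/-- The homogeneous components of `M` in degrees `< b` are zero. -/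
def VanishesBelow (b : ℤ) (gM : ModuleGrading 𝒜 M) : Prop :=
  ∀ j < b, ∀ x, gM.proj j x = 0

theorem VanishesBelow.of_surjective (hM : VanishesBelow b gM) {φ : M →ₗ[A] N}
    (hφ : IsGradedMap gM gN φ) (hsurj : Function.Surjective φ) : VanishesBelow b gN := by
  intro j hj y
  obtain ⟨x, rfl⟩ := hsurj y
  rw [hφ, hM j hj, map_zero]

theorem VanishesBelow.restrict (hM : VanishesBelow b gM) {P : Submodule A M}
    (hP : IsStable gM P) : VanishesBelow b (gM.restrict P hP) :=
  fun j hj x => Subtype.ext (hM j hj x)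

-- Graded Nakayama: strip off one factor of `x` at a time until the degree drops below `b`.
theorem VanishesBelow.eq_top_of_sup_range_lsmul (hM : VanishesBelow b gM) {P : Submodule A M}
    (hP : IsStable gM P) {e : ℕ} (he : 0 < e) {x : A} (hx : x ∈ 𝒜 e)
    (h : P ⊔ LinearMap.range (LinearMap.lsmul A M x) = ⊤) : P = ⊤ := by
  have proj_mem (n : ℕ) : ∀ j < b + n, ∀ y, gM.proj j y ∈ P := by
    induction n with
    | zero =>
      intro j hj y
      rw [hM j (by simpa using hj)]
      exact P.zero_mem
    | succ n ih =>
      intro j hj y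
      obtain ⟨p, hp, _, ⟨z, rfl⟩, rfl⟩ := Submodule.mem_sup.mp (h ▸ Submodule.mem_top (x := y))
      rw [map_add, LinearMap.lsmul_apply, gM.proj_smul hx]
      exact P.add_mem (hP j p hp) (P.smul_mem x (ih _ (by lia) z))
  exact eq_top_iff.mpr fun y _ => gM.mem_of_forall_proj_mem fun j =>
    proj_mem (j - b + 1).toNat j (by lia) y

theorem isStable_range_lsmul {e : ℕ} {x : A} (hx : x ∈ 𝒜 e) :
    IsStable gM (LinearMap.range (LinearMap.lsmul A M x)) := by
  rintro j _ ⟨y, rfl⟩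
  exact ⟨gM.proj (j - e) y, (gM.proj_smul hx j y).symm⟩

theorem isGradedShortExact_lsmul {e : ℕ} {x : A} (hx : x ∈ 𝒜 e) (hreg : IsSMulRegular M x) :
    IsGradedShortExact (gM.shift e) gM (gM.quotient _ (isStable_range_lsmul hx))
      (LinearMap.lsmul A M x) (LinearMap.range (LinearMap.lsmul A M x)).mkQ :=
  ⟨gM.proj_smul hx, .mkQ _, hreg, Submodule.mkQ_surjective _,
    fun _ => Submodule.Quotient.mk_eq_zero _⟩

end VanishesBelow

variable [AddSubmonoidClass S A] {𝒜 : ℕ → S} [GradedRing 𝒜] {b t : ℤ} {x : A}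

theorem vanishesBelow_freeGrading {ι : Type*} {σ : ι → ℤ} (h : ∀ k, b ≤ σ k) :
    VanishesBelow b (freeGrading 𝒜 σ) := fun j hj x => Finsupp.ext fun k =>
  component_of_neg 𝒜 (by linarith [h k]) (x k)

variable {M N : Type u} [AddCommGroup M] [Module A M] [AddCommGroup N] [Module A N]
  {gM : ModuleGrading 𝒜 M} {gN : ModuleGrading 𝒜 N} {n : ℕ}

theorem RegLEUpTo.exists_cover_of_vanishesBelow (h : RegLEUpTo (n + 1) t gM)
    (hM : VanishesBelow b gM) :
    ∃ (ι : Type u) (σ : ι → ℤ) (φ : (ι →₀ A) →ₗ[A] M), IsGradedMap (freeGrading 𝒜 σ) gM φ ∧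
      (∀ k, b ≤ σ k) ∧ (∀ k, σ k ≤ t) ∧ Function.Surjective φ := by
  obtain ⟨ι, σ, φ, hφ, hσ, hsurj, -⟩ := h
  let φ' : ({k // b ≤ σ k} →₀ A) →ₗ[A] M :=
    Finsupp.linearCombination A fun k => φ (Finsupp.single k 1)
  have hφ' (k) : φ' (Finsupp.single k 1) = φ (Finsupp.single k 1) := by simp [φ']
  refine ⟨{k // b ≤ σ k}, fun k => σ k, φ', .of_proj_single fun k => ?_, fun k => k.2,
    fun k => hσ k, LinearMap.range_eq_top.mp ?_⟩
  · rw [hφ', hφ.proj_single]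
  · rw [← top_le_iff, ← LinearMap.range_eq_top.mpr hsurj, LinearMap.range_eq_map,
      ← Finsupp.basisSingleOne.span_eq, Submodule.map_span_le]
    rintro _ ⟨k, rfl⟩
    rw [Finsupp.coe_basisSingleOne]
    obtain hk | hk := le_or_gt b (σ k)
    · exact ⟨Finsupp.single ⟨k, hk⟩ 1, hφ' _⟩
    · rw [← hφ.proj_single, hM _ hk]
      exact Submodule.zero_mem _

theorem RegLEUpTo.of_isGradedShortExact_smul {f : M →ₗ[A] M} {g : M →ₗ[A] N} (hx : x ∈ 𝒜 1)
    (hreg : IsSMulRegular A x) (hs : IsGradedShortExact (gM.shift 1) gM gN f g)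
    (hf : ∀ y, f y = x • y) (hM : VanishesBelow b gM) (h : RegLEUpTo n t gN) :
    RegLEUpTo n t gM := by
  induction n generalizing t M N with
  | zero => trivial
  | succ n ih =>
    obtain ⟨ι, σ, φ, hφ, hbσ, hσt, hφsurj⟩ :=
      h.exists_cover_of_vanishesBelow (hM.of_surjective hs.graded_right hs.surjective)
    obtain ⟨ψ, hψ, rfl⟩ := hs.graded_right.exists_lift hs.surjective hφ
    have hψsurj : Function.Surjective ψ := by
      refine LinearMap.range_eq_top.mp (hM.eq_top_of_sup_range_lsmul hψ.range one_pos hx ?_)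
      refine eq_top_iff.mpr fun y _ => ?_
      obtain ⟨c, hc⟩ := hφsurj (g y)
      obtain ⟨z, hz⟩ := (hs.exact (y - ψ c)).mp (by rw [map_sub, ← hc]; exact sub_self _)
      exact Submodule.mem_sup.mpr ⟨ψ c, ⟨c, rfl⟩, f z, ⟨z, (hf z).symm⟩, by rw [hz]; abel⟩
    have hfree := isGradedShortExact_lsmul (gM := freeGrading 𝒜 σ) hx
      fun y z hyz => Finsupp.ext fun k => hreg (DFunLike.congr_fun hyz k)
    let χ := (LinearMap.range (LinearMap.lsmul A (ι →₀ A) x)).liftQ (g ∘ₗ ψ) <| by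
      rintro _ ⟨y, rfl⟩
      rw [LinearMap.mem_ker, LinearMap.lsmul_apply, map_smul, LinearMap.comp_apply, ← map_smul,
        ← hf, hs.exact.apply_apply_eq_zero]
    have hχ := hfree.graded_right.of_comp_surjective (q := χ) hφ (Submodule.mkQ_surjective _)
    have hquot : RegLE t ((freeGrading 𝒜 σ).quotient _ (isStable_range_lsmul hx)) :=
      .cokernel hfree (fun _ => .free hσt) (.shift fun _ => .free (by simpa using hσt))
    obtain ⟨i, p, hker, hi⟩ := hs.exists_ker hfree (hψ.shift 1) hψ hχ hψsurj
      (fun y => by rw [LinearMap.lsmul_apply, map_smul, hf]) fun _ => rfl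
    have hχsurj : Function.Surjective χ := .of_comp (g := Submodule.mkQ _) hφsurj
    refine ⟨ι, σ, ψ, hψ, hσt, hψsurj, ih hker (fun y => Subtype.ext (hi y))
      ((vanishesBelow_freeGrading hbσ).restrict _) ?_⟩
    exact .kernel (hχ.isGradedShortExact_ker hχsurj) ((hquot n).mono (by lia))
      (by rwa [add_sub_cancel_right])

theorem QuotRegLE.of_isSMulRegular {I : Ideal A} (hx : x ∈ 𝒜 1) (hreg : IsSMulRegular A x)
    (hI : I.IsHomogeneous 𝒜) (hcolon : I.colon {x} = I) (h : QuotRegLE 𝒜 t (I ⊔ Ideal.span {x})) :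
    QuotRegLE 𝒜 t I := by
  obtain ⟨α, β, hs, hα⟩ := exists_isGradedShortExact_colon hcolon hI hx
  refine ⟨hI, fun n => .of_isGradedShortExact_smul (b := 0) hx hreg hs (fun y => ?_) ?_ (h.2 n)⟩
  · obtain ⟨y, rfl⟩ := I.mkQ_surjective y
    exact hα y
  · exact VanishesBelow.of_surjective (fun j hj => component_of_neg 𝒜 hj) (.mkQ _) I.mkQ_surjective

theorem exists_quotRegLE_of_forall_subset [IsNoetherianRing A] (X : Set A)
    (hX : ∀ x ∈ X, x ∈ 𝒜 1 ∧ IsSMulRegular A x)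
    (hbase : ∀ I : Ideal A, I.IsHomogeneous 𝒜 → X ⊆ I → ∃ t, QuotRegLE 𝒜 t I) {I : Ideal A}
    (hI : I.IsHomogeneous 𝒜) : ∃ t, QuotRegLE 𝒜 t I := by
  induction I using WellFoundedGT.induction with
  | ind I ih =>
  by_cases hXI : X ⊆ I
  · exact hbase I hI hXI
  obtain ⟨x, hxX, hxI⟩ := Set.not_subset.mp hXI
  obtain ⟨hx, hreg⟩ := hX x hxX
  have hlt : I < I ⊔ Ideal.span {x} :=
    left_lt_sup.mpr fun h => hxI (h (Ideal.mem_span_singleton_self x))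
  obtain ⟨t, ht⟩ := ih _ hlt (hI.sup (isHomogeneous_span_singleton hx))
  obtain hcolon | hcolon := (Ideal.le_colon (I := I) (S := {x})).eq_or_lt
  · exact ⟨t, ht.of_isSMulRegular hx hreg hI hcolon.symm⟩
  · obtain ⟨t', ht'⟩ := ih _ hcolon (isHomogeneous_colon_singleton hI hx)
    exact ⟨max t (t' + 1), .of_colon_of_sup hI hx (ht'.mono (by lia)) (ht.mono (by lia))⟩

end Nonzerodivisor

section Generators

variable {A : Type*} [CommRing A] {M : Type*} [AddCommGroup M] [Module A M]

theorem mem_span_image_compl_of_linearCombination_eq_zero {ι : Type*} {v : ι → M} {c : ι →₀ A}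
    (hc : Finsupp.linearCombination A v c = 0) {k : ι} (hk : IsUnit (c k)) :
    v k ∈ Submodule.span A (v '' {k}ᶜ) := by
  rw [← Submodule.smul_mem_iff_of_isUnit _ hk]
  rw [← Finsupp.single_add_erase k c, map_add, Finsupp.linearCombination_single] at hc
  rw [eq_neg_of_add_eq_zero_left hc, Submodule.neg_mem_iff]
  exact Finsupp.mem_span_image_iff_linearCombination A |>.mpr
    ⟨c.erase k, by simp [Finsupp.mem_supported], rfl⟩

theorem ModuleGrading.exists_finset_homogeneous_span_eq_top {S : Type*} [SetLike S A]
    {𝒜 : ℕ → S} [Module.Finite A M] (gM : ModuleGrading 𝒜 M) :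
    ∃ s : Finset M, (∀ z ∈ s, ∃ j, gM.proj j z = z) ∧ Submodule.span A (s : Set M) = ⊤ := by
  classical
  obtain ⟨s, hs⟩ := Module.Finite.fg_top (R := A) (M := M)
  choose e he using gM.exists_sum_proj
  refine ⟨s.biUnion fun x => (e x).image fun j => gM.proj j x, fun z hz => ?_, ?_⟩
  · simp only [Finset.mem_biUnion, Finset.mem_image] at hz
    obtain ⟨x, -, j, -, rfl⟩ := hz
    exact ⟨j, gM.proj_proj_self j x⟩
  · rw [← top_le_iff, ← hs, Submodule.span_le]
    intro x hx
    rw [← he x]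
    exact Submodule.sum_mem _ fun j hj => Submodule.subset_span
      (Finset.mem_biUnion.mpr ⟨x, hx, Finset.mem_image_of_mem _ hj⟩)

end Generators

section MinimalResolution

open scoped HomogeneousIdeal

variable {A : Type u} [CommRing A] {S : Type*} [SetLike S A] [AddSubmonoidClass S A]
  {𝒜 : ℕ → S} [GradedRing 𝒜]

theorem mem_irrelevant_iff_component {a : A} : a ∈ 𝒜₊.toIdeal ↔ component 𝒜 0 a = 0 := by
  rw [← Nat.cast_zero, component_natCast]
  exact HomogeneousIdeal.mem_irrelevant_iff 𝒜 a

theorem one_notMem_irrelevant [Nontrivial A] : (1 : A) ∉ 𝒜₊.toIdeal := by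
  rw [mem_irrelevant_iff_component, component_of_mem SetLike.GradedOne.one_mem,
    if_pos Nat.cast_zero.symm]
  exact one_ne_zero

variable {M : Type u} [AddCommGroup M] [Module A M] {gM : ModuleGrading 𝒜 M} {t : ℤ}

/-- A minimal graded free cover: a graded surjection `φ` from a free module `F`, whose basis is
homogeneous of degrees `σ`, such that `ker φ ⊆ 𝒜₊ F`. -/
structure IsMinimalCover {ι : Type u} (σ : ι → ℤ) (gM : ModuleGrading 𝒜 M)
    (φ : (ι →₀ A) →ₗ[A] M) : Prop where
  graded : IsGradedMap (freeGrading 𝒜 σ) gM φ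
  surjective : Function.Surjective φ
  mem_irrelevant : ∀ x, φ x = 0 → ∀ k, x k ∈ 𝒜₊.toIdeal

-- A lift to `F` of a cover generated in degrees `≤ t` misses the basis vectors of degree `> t`.
theorem IsMinimalCover.degree_le [Nontrivial A] {ι : Type u} {σ : ι → ℤ} {φ : (ι →₀ A) →ₗ[A] M}
    (hφ : IsMinimalCover σ gM φ) (h : RegLEUpTo 1 t gM) (k : ι) : σ k ≤ t := by
  obtain ⟨κ, τ, ψ, hψ, hτ, hψsurj, -⟩ := h
  obtain ⟨χ, hχ, rfl⟩ := hφ.graded.exists_lift hφ.surjective hψ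
  by_contra! hk
  have hχk : Finsupp.lapply k ∘ₗ χ = 0 := by
    ext l
    simp only [LinearMap.comp_apply, Finsupp.lsingle_apply, Finsupp.lapply_apply,
      LinearMap.zero_apply]
    rw [← hχ.proj_single, freeGrading_proj_apply, component_of_neg 𝒜 (by linarith [hτ l])]
  obtain ⟨y, hy⟩ := hψsurj (φ (Finsupp.single k 1))
  have := hφ.mem_irrelevant (Finsupp.single k 1 - χ y)
    (by rw [map_sub, ← hy, LinearMap.comp_apply, sub_self]) k
  rw [Finsupp.sub_apply, Finsupp.single_eq_same, show χ y k = 0 from LinearMap.congr_fun hχk y,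
    sub_zero] at this
  exact one_notMem_irrelevant this

theorem IsMinimalCover.regLE_ker [Nontrivial A] {ι : Type u} {σ : ι → ℤ}
    {φ : (ι →₀ A) →ₗ[A] M} (hφ : IsMinimalCover σ gM φ) (h : RegLE t gM) :
    RegLE (t + 1) hφ.graded.kerGrading :=
  .kernel (hφ.graded.isGradedShortExact_ker hφ.surjective)
    (fun _ => .free fun k => (hφ.degree_le (h 1) k).trans (by lia)) (by rwa [add_sub_cancel_right])

/-- The free modules `Fᵢ` with homogeneous bases of degrees `σ i`, the maps `d i : Fᵢ₊₁ → Fᵢ` and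
the augmentation `ε : F₀ → M` form a minimal graded free resolution of `M`. -/
structure IsMinimalFreeResolution {ι : ℕ → Type u} (σ : ∀ i, ι i → ℤ)
    (d : ∀ i, (ι (i + 1) →₀ A) →ₗ[A] (ι i →₀ A)) (gM : ModuleGrading 𝒜 M)
    (ε : (ι 0 →₀ A) →ₗ[A] M) : Prop where
  graded_d : ∀ i, IsGradedMap (freeGrading 𝒜 (σ (i + 1))) (freeGrading 𝒜 (σ i)) (d i)
  graded_ε : IsGradedMap (freeGrading 𝒜 (σ 0)) gM ε
  exact_d : ∀ i, Function.Exact (d (i + 1)) (d i)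
  exact_ε : Function.Exact (d 0) ε
  surjective : Function.Surjective ε
  mem_irrelevant : ∀ i x k, d i x k ∈ 𝒜₊.toIdeal

namespace IsMinimalFreeResolution

variable {ι : ℕ → Type u} {σ : ∀ i, ι i → ℤ} {d : ∀ i, (ι (i + 1) →₀ A) →ₗ[A] (ι i →₀ A)}
  {ε : (ι 0 →₀ A) →ₗ[A] M}

theorem isMinimalCover (h : IsMinimalFreeResolution σ d gM ε) : IsMinimalCover (σ 0) gM ε :=
  ⟨h.graded_ε, h.surjective, fun x hx k => by
    obtain ⟨y, rfl⟩ := (h.exact_ε x).mp hx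
    exact h.mem_irrelevant 0 y k⟩

theorem tail (h : IsMinimalFreeResolution σ d gM ε) :
    IsMinimalFreeResolution (fun i => σ (i + 1)) (fun i => d (i + 1)) h.graded_ε.kerGrading
      ((d 0).codRestrict (LinearMap.ker ε) h.exact_ε.apply_apply_eq_zero) where
  graded_d i := h.graded_d (i + 1)
  graded_ε := (h.graded_d 0).codRestrict _ _
  exact_d i := h.exact_d (i + 1)
  exact_ε x := (Subtype.ext_iff).trans (h.exact_d 0 x)
  surjective := fun ⟨x, hx⟩ => ((h.exact_ε x).mp hx).imp fun _ => Subtype.ext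
  mem_irrelevant i := h.mem_irrelevant (i + 1)

theorem regLE_iff [Nontrivial A] (h : IsMinimalFreeResolution σ d gM ε) :
    RegLE t gM ↔ ∀ i k, σ i k - i ≤ t := by
  refine ⟨fun ht i => ?_, fun ht n => ?_⟩
  · induction i generalizing M t ι with
    | zero => exact fun k => by simpa using h.isMinimalCover.degree_le (ht 1) k
    | succ i ih =>
      intro k
      have := ih h.tail (h.isMinimalCover.regLE_ker ht) k
      push_cast
      linarith
  · induction n generalizing M t ι with
    | zero => trivial
    | succ n ih =>
      refine ⟨ι 0, σ 0, ε, h.graded_ε, fun k => by simpa using ht 0 k, h.surjective, ?_⟩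
      refine ih h.tail fun i k => ?_
      have := ht (i + 1) k
      push_cast at this
      linarith

end IsMinimalFreeResolution

theorem exists_isMinimalCover (hunit : ∀ a ∈ 𝒜 0, a ≠ 0 → IsUnit a) [Module.Finite A M]
    (gM : ModuleGrading 𝒜 M) :
    ∃ (ι : Type u) (_ : Finite ι) (σ : ι → ℤ) (φ : (ι →₀ A) →ₗ[A] M), IsMinimalCover σ gM φ := by
  classical
  obtain ⟨s, ⟨hhom, hspan⟩, hmin⟩ :=
    exists_minimal_of_wellFoundedLT _ gM.exists_finset_homogeneous_span_eq_top
  choose σ hσ using fun z : s => hhom z z.2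
  have hφ : IsGradedMap (freeGrading 𝒜 σ) gM (Finsupp.linearCombination A Subtype.val) :=
    .of_proj_single fun k => by simp [hσ]
  refine ⟨s, inferInstance, σ, _, hφ, ?_, fun c hc k => ?_⟩
  · rw [← LinearMap.range_eq_top, Finsupp.range_linearCombination, Subtype.range_coe]
    exact hspan
  by_contra hck
  have hc' : Finsupp.linearCombination A Subtype.val ((freeGrading 𝒜 σ).proj (σ k) c) = 0 := by
    rw [← hφ, hc, map_zero]
  have hk : IsUnit ((freeGrading 𝒜 σ).proj (σ k) c k) := by
    rw [freeGrading_proj_apply, sub_self]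
    exact hunit _ (component_mem 𝒜 0 _) (mem_irrelevant_iff_component.not.mp hck)
  have hmem := mem_span_image_compl_of_linearCombination_eq_zero hc' hk
  have himage : (Subtype.val '' {k}ᶜ : Set M) = (s.erase (k : M) : Set M) := by
    rw [Set.image_compl_eq_range_sdiff_image Subtype.val_injective, Subtype.range_coe,
      Set.image_singleton, Finset.coe_erase]
  rw [himage] at hmem
  refine Finset.notMem_erase (k : M) s
    (hmin ⟨fun z hz => hhom z (Finset.mem_of_mem_erase hz), ?_⟩ (Finset.erase_subset _ s) k.2)
  rw [← hspan, ← Submodule.span_insert_eq_span hmem, ← Finset.coe_insert,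
    Finset.insert_erase k.2]

/-- A bundled finitely generated graded module, so that taking syzygies can be iterated. -/
structure FGGradedModule (𝒜 : ℕ → S) where
  carrier : Type u
  [addCommGroup : AddCommGroup carrier]
  [module : Module A carrier]
  [finite : Module.Finite A carrier]
  grading : ModuleGrading 𝒜 carrier

attribute [instance] FGGradedModule.addCommGroup FGGradedModule.module FGGradedModule.finite

theorem exists_isMinimalFreeResolution [IsNoetherianRing A]
    (hunit : ∀ a ∈ 𝒜 0, a ≠ 0 → IsUnit a) [Module.Finite A M] (gM : ModuleGrading 𝒜 M) :
    ∃ (ι : ℕ → Type u) (σ : ∀ i, ι i → ℤ) (d : ∀ i, (ι (i + 1) →₀ A) →ₗ[A] (ι i →₀ A))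
      (ε : (ι 0 →₀ A) →ₗ[A] M), (∀ i, Finite (ι i)) ∧ IsMinimalFreeResolution σ d gM ε := by
  choose ι hfin σ φ hφ using fun P : FGGradedModule 𝒜 => exists_isMinimalCover hunit P.grading
  let syzygy (P : FGGradedModule 𝒜) : FGGradedModule 𝒜 :=
    ⟨LinearMap.ker (φ P), (hφ P).graded.kerGrading⟩
  let δ (P : FGGradedModule 𝒜) : (ι (syzygy P) →₀ A) →ₗ[A] (ι P →₀ A) :=
    (LinearMap.ker (φ P)).subtype ∘ₗ φ (syzygy P)
  have graded_δ (P : FGGradedModule 𝒜) :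
      IsGradedMap (freeGrading 𝒜 (σ (syzygy P))) (freeGrading 𝒜 (σ P)) (δ P) :=
    (IsGradedMap.subtype (hφ P).graded.ker).comp (hφ (syzygy P)).graded
  have exact_δ (P : FGGradedModule 𝒜) : Function.Exact (δ P) (φ P) := by
    rw [LinearMap.exact_iff, LinearMap.range_comp_of_range_eq_top _
      (LinearMap.range_eq_top.mpr (hφ (syzygy P)).surjective), Submodule.range_subtype]
  have δ_mem_irrelevant (P : FGGradedModule 𝒜) (x k) : δ P x k ∈ 𝒜₊.toIdeal :=
    (hφ P).mem_irrelevant _ (φ (syzygy P) x).2 k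
  let P : ℕ → FGGradedModule 𝒜 := Nat.rec ⟨M, gM⟩ fun _ => syzygy
  exact ⟨fun i => ι (P i), fun i => σ (P i), fun i => δ (P i), φ ⟨M, gM⟩, fun i => hfin (P i),
    { graded_d i := graded_δ (P i)
      graded_ε := (hφ ⟨M, gM⟩).graded
      exact_d i x := ZeroMemClass.coe_eq_zero.trans (exact_δ (syzygy (P i)) x)
      exact_ε := exact_δ ⟨M, gM⟩
      surjective := (hφ ⟨M, gM⟩).surjective
      mem_irrelevant i := δ_mem_irrelevant (P i) }⟩

end MinimalResolution

section DSequence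

variable {A : Type u} [CommRing A] {n : ℕ} {f : Fin n → A}

theorem partialIdeal_mono (f : Fin n → A) : Monotone (partialIdeal f) := fun _ _ h =>
  Ideal.span_mono (Set.image_mono fun _ hj => lt_of_lt_of_le hj h)

theorem partialIdeal_le_span_range (f : Fin n → A) (i : ℕ) :
    partialIdeal f i ≤ Ideal.span (Set.range f) :=
  Ideal.span_mono (Set.image_subset_range _ _)

theorem exists_of_mem_partialIdeal_succ_mul {i : Fin n} {K : Ideal A} {u : A}
    (hu : u ∈ partialIdeal f (i + 1) * K) :
    ∃ v ∈ partialIdeal f i * K, ∃ w ∈ K, v + f i * w = u := by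
  rw [partialIdeal_succ, Ideal.sup_mul] at hu
  obtain ⟨v, hv, x, hx, rfl⟩ := Submodule.mem_sup.mp hu
  obtain ⟨w, hw, rfl⟩ := Ideal.mem_span_singleton_mul.mp hx
  exact ⟨v, hv, w, hw, rfl⟩

theorem sup_sup_span_singleton_pow (J : Ideal A) (g : A) (s : ℕ) :
    J ⊔ (J ⊔ Ideal.span {g}) ^ s = J ⊔ Ideal.span {g ^ s} := by
  rw [← Ideal.span_singleton_pow]
  refine le_antisymm (sup_le le_sup_left ?_)
    (sup_le_sup_left (Ideal.pow_right_mono le_sup_right s) J)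
  induction s with
  | zero => simp
  | succ s ih =>
    rw [pow_succ, pow_succ]
    refine (Ideal.mul_mono_left ih).trans ?_
    rw [Ideal.sup_mul, Ideal.mul_sup (Ideal.span {g} ^ s)]
    exact sup_le (Ideal.mul_le_left.trans le_sup_left) (sup_le_sup_right Ideal.mul_le_right _)

namespace IsDSequence

theorem mem_partialIdeal (hf : IsDSequence f) {i : Fin n} {a : A}
    (ha : a * f i ∈ partialIdeal f i) (haI : a ∈ Ideal.span (Set.range f)) : a ∈ partialIdeal f i :=
  (hf i).le ⟨Ideal.mem_colon_span_singleton.mpr ha, haI⟩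

theorem partialIdeal_inf_pow_succ_le (hf : IsDSequence f) (s : ℕ) {i : ℕ} (hi : i ≤ n) :
    partialIdeal f i ⊓ Ideal.span (Set.range f) ^ (s + 1)
      ≤ partialIdeal f i * Ideal.span (Set.range f) ^ s := by
  set I := Ideal.span (Set.range f)
  induction s generalizing i with
  | zero => simp
  | succ s ihs =>
    induction hi using Nat.decreasingInduction with
    | self =>
      rw [partialIdeal_self, ← pow_succ']
      exact inf_le_right
    | of_succ i hi ih =>
      rintro u ⟨hu, huI⟩
      obtain ⟨v, hv, w, hw, rfl⟩ := exists_of_mem_partialIdeal_succ_mul (i := ⟨i, hi⟩)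
        (ih ⟨partialIdeal_mono f i.le_succ hu, huI⟩)
      have hwf : w * f ⟨i, hi⟩ ∈ partialIdeal f i := by
        rw [mul_comm]
        exact ((partialIdeal f i).add_mem_iff_right (Ideal.mul_le_left hv)).mp hu
      have hw' : w ∈ partialIdeal f i * I ^ s :=
        ihs hi.le ⟨hf.mem_partialIdeal (i := ⟨i, hi⟩) hwf (Ideal.pow_le_self s.succ_ne_zero hw), hw⟩
      refine add_mem hv ?_
      rw [mul_comm (f _), pow_succ, ← mul_assoc]
      exact Ideal.mul_mem_mul hw' (Ideal.subset_span (Set.mem_range_self _))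

theorem colon_sup_pow_succ (hf : IsDSequence f) {i : Fin n}
    (hi : (partialIdeal f i).colon {f i} = partialIdeal f i) (s : ℕ) :
    (partialIdeal f i ⊔ Ideal.span (Set.range f) ^ (s + 1)).colon {f i}
      = partialIdeal f i ⊔ Ideal.span (Set.range f) ^ s := by
  set I := Ideal.span (Set.range f)
  have hfi : f i ∈ I := Ideal.subset_span (Set.mem_range_self i)
  refine le_antisymm (fun a ha => ?_) (sup_le ?_ fun a ha => ?_)
  · obtain ⟨u, hu, v, hv, huv⟩ := Submodule.mem_sup.mp (Submodule.mem_colon_singleton.mp ha)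
    rw [smul_eq_mul] at huv
    have hv_succ : v ∈ partialIdeal f (i + 1) := by
      rw [← (partialIdeal f (i + 1)).add_mem_iff_right (partialIdeal_mono f i.1.le_succ hu), huv]
      exact Ideal.mul_mem_left _ _ (Ideal.subset_span ⟨i, i.1.lt_succ_self, rfl⟩)
    obtain ⟨v', hv', w, hw, rfl⟩ := exists_of_mem_partialIdeal_succ_mul
      (hf.partialIdeal_inf_pow_succ_le s i.2 ⟨hv_succ, hv⟩)
    have haw : a - w ∈ (partialIdeal f i).colon {f i} := by
      rw [Submodule.mem_colon_singleton, smul_eq_mul, sub_mul, ← huv, mul_comm w, ← add_assoc,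
        add_sub_cancel_right]
      exact add_mem hu (Ideal.mul_le_left hv')
    rw [hi] at haw
    exact Submodule.mem_sup.mpr ⟨a - w, haw, w, hw, sub_add_cancel a w⟩
  · exact le_sup_left.trans Ideal.le_colon
  · rw [Submodule.mem_colon_singleton, smul_eq_mul, pow_succ]
    exact Ideal.mem_sup_right (Ideal.mul_mem_mul ha hfi)

theorem colon_pow_succ (hf : IsDSequence f) (i : Fin n) (s : ℕ) :
    (partialIdeal f i).colon {f i ^ (s + 1)} = (partialIdeal f i).colon {f i} := by
  ext a
  simp only [Submodule.mem_colon_singleton, smul_eq_mul]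
  induction s with
  | zero => simp
  | succ s ih =>
    rw [← ih, pow_succ, ← mul_assoc]
    refine ⟨fun h => hf.mem_partialIdeal h ?_, Ideal.mul_mem_right _ _⟩
    rw [pow_succ, ← mul_assoc]
    exact Ideal.mul_mem_left _ _ (Ideal.subset_span (Set.mem_range_self i))

end IsDSequence

section PowersRegularity

variable {S : Type*} [SetLike S A] [AddSubmonoidClass S A] {𝒜 : ℕ → S} [GradedRing 𝒜]
  {f : Fin (n + 1) → A} {d : Fin (n + 1) → ℕ} {r : ℤ}

namespace IsDSequence

theorem hasQuotReg_partialIdeal_sup_pow_last (hf : IsDSequence f)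
    (hd : ∀ l, f l ∈ 𝒜 (d l)) (hlast : 1 ≤ d (Fin.last n))
    (hJ : HasQuotReg 𝒜 r (partialIdeal f n))
    (hI : QuotRegLE 𝒜 (r - 1) (Ideal.span (Set.range f))) (s : ℕ) :
    HasQuotReg 𝒜 (r + (s + 1) * d (Fin.last n) - 1)
      (partialIdeal f n ⊔ Ideal.span (Set.range f) ^ (s + 2)) := by
  have hIJ := partialIdeal_succ f (Fin.last n)
  have hcolon := hf.colon_pow_succ (Fin.last n) (s + 1)
  rw [Fin.val_last] at hIJ hcolon
  rw [← partialIdeal_self, hIJ] at hI ⊢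
  rw [sup_sup_span_singleton_pow]
  refine HasQuotReg.sup_span_singleton (e := (s + 2) • d (Fin.last n)) ?_
    (SetLike.pow_mem_graded _ (hd _)) (hJ.1.mono ?_)
  · rw [hcolon]
    convert hJ.colon_singleton (hd _) hI using 1
    push_cast [smul_eq_mul]
    ring
  · have : 0 ≤ (s : ℤ) * d (Fin.last n) := by positivity
    linarith [(Nat.cast_le (α := ℤ)).mpr hlast]

theorem hasQuotReg_partialIdeal_sup_pow (hf : IsDSequence f) (hd : ∀ l, f l ∈ 𝒜 (d l))
    (hle : ∀ l, d l ≤ d (Fin.last n))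
    (hreg : ∀ i : Fin n,
      (partialIdeal f i.castSucc).colon {f i.castSucc} = partialIdeal f i.castSucc)
    {t : ℤ} {s : ℕ}
    (hcolon : ∀ i : Fin n,
      QuotRegLE 𝒜 (t - d (Fin.last n))
        (partialIdeal f i.castSucc ⊔ Ideal.span (Set.range f) ^ (s + 1)))
    (hlast : HasQuotReg 𝒜 t (partialIdeal f n ⊔ Ideal.span (Set.range f) ^ (s + 2)))
    (i : Fin (n + 1)) :
    HasQuotReg 𝒜 t (partialIdeal f i ⊔ Ideal.span (Set.range f) ^ (s + 2)) := by
  induction i using Fin.reverseInduction with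
  | last => exact hlast
  | cast i ih =>
    rw [Fin.val_succ, ← Fin.val_castSucc, partialIdeal_succ, sup_right_comm] at ih
    refine ih.of_sup_span_singleton (hd _) ((isHomogeneous_partialIdeal hd _).sup ?_) ?_
    · exact isHomogeneous_pow (isHomogeneous_span_range hd) _
    · rw [hf.colon_sup_pow_succ (hreg i)]
      exact (hcolon i).mono (by have := hle i.castSucc; lia)

theorem hasQuotReg_pow (hf : IsDSequence f) (hd : ∀ l, f l ∈ 𝒜 (d l))
    (hle : ∀ l, d l ≤ d (Fin.last n))
    (hreg : ∀ i : Fin n,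
      (partialIdeal f i.castSucc).colon {f i.castSucc} = partialIdeal f i.castSucc)
    (hlast : 1 ≤ d (Fin.last n)) (hJ : HasQuotReg 𝒜 r (partialIdeal f n))
    (hI : QuotRegLE 𝒜 (r - 1) (Ideal.span (Set.range f))) (s : ℕ) :
    HasQuotReg 𝒜 (r + (s + 1) * d (Fin.last n) - 1) (Ideal.span (Set.range f) ^ (s + 2)) := by
  have h_top := hf.hasQuotReg_partialIdeal_sup_pow_last hd hlast hJ hI
  suffices ∀ i : Fin (n + 1), HasQuotReg 𝒜 (r + (s + 1) * d (Fin.last n) - 1)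
      (partialIdeal f i ⊔ Ideal.span (Set.range f) ^ (s + 2)) by
    simpa [partialIdeal_zero] using this 0
  induction s with
  | zero =>
    refine hf.hasQuotReg_partialIdeal_sup_pow hd hle hreg (fun i => ?_) (h_top 0)
    rw [zero_add, pow_one, sup_eq_right.mpr (partialIdeal_le_span_range f _)]
    exact hI.mono (by push_cast; linarith)
  | succ s ih =>
    refine hf.hasQuotReg_partialIdeal_sup_pow hd hle hreg (fun i => ?_) (h_top (s + 1))
    refine (ih i.castSucc).1.mono (le_of_eq ?_)
    push_cast
    ring

end IsDSequence

end PowersRegularity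

end DSequence

section QuotientResolution

open scoped HomogeneousIdeal

variable {K A : Type} [Field K] [CommRing A] [Algebra K A] {𝒜 : ℕ → Submodule K A}
  [GradedAlgebra 𝒜]

theorem mem_zg_iff {j : ℤ} {a : A} : a ∈ zg 𝒜 j ↔ component 𝒜 j a = a := by
  obtain ⟨n, rfl⟩ | hj := (le_or_gt 0 j).imp_left Int.eq_ofNat_of_zero_le
  · rw [zg, if_pos n.cast_nonneg, Int.toNat_natCast]
    exact ⟨fun ha => by rw [component_of_mem ha, if_pos rfl], fun ha => ha ▸ component_mem 𝒜 n a⟩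
  · rw [zg, if_neg hj.not_ge, component_of_neg 𝒜 hj, Submodule.mem_bot, eq_comm]

theorem irrel_eq_irrelevant : irrel 𝒜 = 𝒜₊.toIdeal := by
  rw [HomogeneousIdeal.irrelevant_eq_span, irrel]
  congr 1
  ext a
  simp only [Set.mem_iUnion]
  exact ⟨fun ⟨n, ha⟩ => ⟨n + 1, n.succ_pos, ha⟩, fun ⟨n, hn, ha⟩ => ⟨n - 1, by
    rwa [Nat.sub_add_cancel hn]⟩⟩

theorem mem_smul_top_finsupp_iff {R ι : Type*} [CommRing R] {J : Ideal R} {x : ι →₀ R} :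
    x ∈ J • (⊤ : Submodule R (ι →₀ R)) ↔ ∀ k, x k ∈ J := by
  refine ⟨fun hx k => ?_, fun hx => ?_⟩
  · have := Submodule.mem_map_of_mem (f := Finsupp.lapply k) hx
    rw [Submodule.map_smul''] at this
    exact Ideal.mul_le_left this
  · rw [← x.sum_single]
    refine Submodule.sum_mem _ fun k _ => ?_
    rw [← Finsupp.smul_single_one]
    exact Submodule.smul_mem_smul (hx k) trivial

theorem forall_mem_zg_iff {ι : Type} {σ : ι → ℤ} {j : ℤ} {x : ι →₀ A} :
    (∀ k, x k ∈ zg 𝒜 (j - σ k)) ↔ (freeGrading 𝒜 σ).proj j x = x := by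
  simp only [mem_zg_iff, Finsupp.ext_iff, freeGrading_proj_apply]

variable {I : Ideal A}

theorem mem_quotPieces_iff (hI : I.IsHomogeneous 𝒜) {j : ℤ} {y : A ⧸ I} :
    y ∈ quotPieces 𝒜 I j ↔ (quotGrading hI).proj j y = y := by
  refine ⟨?_, fun hy => ?_⟩
  · rintro ⟨a, ha, rfl⟩
    exact congrArg I.mkQ (mem_zg_iff.mp ha)
  · obtain ⟨a, rfl⟩ := I.mkQ_surjective y
    exact ⟨component 𝒜 j a, mem_zg_iff.mpr ((selfGrading 𝒜).proj_proj_self j a), hy⟩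

variable (𝒜 I) in
/-- The minimal graded free resolutions of `A ⧸ I`. -/
abbrev QuotResolution : Type 1 :=
  MinGradedFreeRes K A (zg 𝒜) (irrel 𝒜) (A ⧸ I) (quotPieces 𝒜 I)

namespace QuotResolution

theorem isMinimalFreeResolution (R : QuotResolution 𝒜 I) (hI : I.IsHomogeneous 𝒜) :
    IsMinimalFreeResolution R.σ R.d (quotGrading hI) R.ε where
  graded_d i := .of_proj_single fun k => forall_mem_zg_iff.mp <|
    R.graded_d i _ _ <| forall_mem_zg_iff.mpr <| IsGradedMap.id.proj_single k
  graded_ε := .of_proj_single fun k => (mem_quotPieces_iff hI).mp <|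
    R.graded_ε _ _ <| forall_mem_zg_iff.mpr <| IsGradedMap.id.proj_single k
  exact_d := R.exact_d
  exact_ε := R.exact_ε
  surjective := R.surj
  mem_irrelevant i x := mem_smul_top_finsupp_iff.mp (irrel_eq_irrelevant (𝒜 := 𝒜) ▸ R.minimal i x)

theorem nonempty [IsNoetherianRing A] (hunit : ∀ a ∈ 𝒜 0, a ≠ 0 → IsUnit a)
    (hI : I.IsHomogeneous 𝒜) : Nonempty (QuotResolution 𝒜 I) := by
  obtain ⟨ι, σ, d, ε, hfin, h⟩ := exists_isMinimalFreeResolution hunit (quotGrading hI)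
  exact ⟨{
    ι, fin := hfin, σ, d, ε
    exact_d := h.exact_d
    exact_ε := h.exact_ε
    surj := h.surjective
    graded_d i j x hx := forall_mem_zg_iff.mpr <| by
      rw [h.graded_d, forall_mem_zg_iff.mp hx]
    graded_ε j x hx := (mem_quotPieces_iff hI).mpr <| by
      rw [h.graded_ε, forall_mem_zg_iff.mp hx]
    minimal i x := irrel_eq_irrelevant (𝒜 := 𝒜) ▸
      mem_smul_top_finsupp_iff.mpr (h.mem_irrelevant i x) }⟩

variable [Nontrivial A] {t : ℤ} (R : QuotResolution 𝒜 I)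

theorem degree_sub_le (h : QuotRegLE 𝒜 t I) (i : ℕ) (k : R.ι i) : R.σ i k - i ≤ t :=
  (R.isMinimalFreeResolution h.1).regLE_iff.mp h.2 i k

theorem reg_eq (h : HasQuotReg 𝒜 t I) : R.reg = t := by
  have hnot := h.2
  rw [QuotRegLE, exists_prop_of_true h.1.1, (R.isMinimalFreeResolution h.1.1).regLE_iff] at hnot
  push Not at hnot
  obtain ⟨i, k, hik⟩ := hnot
  refine IsGreatest.csSup_eq ⟨⟨i, k, ?_⟩, ?_⟩
  · exact le_antisymm (by lia) (R.degree_sub_le h.1 i k)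
  · rintro _ ⟨i, k, rfl⟩
    exact R.degree_sub_le h.1 i k

theorem quotRegLE_reg (h : QuotRegLE 𝒜 t I) : QuotRegLE 𝒜 R.reg I := by
  refine ⟨h.1, (R.isMinimalFreeResolution h.1).regLE_iff.mpr fun i k => ?_⟩
  refine le_csSup ⟨t, ?_⟩ ⟨i, k, rfl⟩
  rintro _ ⟨i, k, rfl⟩
  exact R.degree_sub_le h i k

-- For `I = ⊤` the resolution is zero, and the supremum of the empty set of integers is `0`.
theorem reg_nonneg (h : QuotRegLE 𝒜 t I) : 0 ≤ R.reg := by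
  by_contra! hneg
  obtain rfl := eq_top_of_quotRegLE_of_neg (R.quotRegLE_reg h) hneg
  have hempty : {x : ℤ | ∃ (i : ℕ) (k : R.ι i), x = R.σ i k - (i : ℤ)} = ∅ := by
    refine Set.eq_empty_of_forall_notMem ?_
    rintro x ⟨i, k, rfl⟩
    exact (R.degree_sub_le quotRegLE_top i k).not_gt (sub_one_lt _)
  rw [MinGradedFreeRes.reg, hempty, Int.csSup_empty] at hneg
  exact hneg.false

end QuotResolution

end QuotientResolution

section GradedIdeal

open scoped HomogeneousIdeal

variable {A : Type u} [CommRing A] {S : Type*} [SetLike S A] {𝒜 : ℕ → S}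

theorem IsRegSeq.one_le_degree (hunit : ∀ a ∈ 𝒜 0, a ≠ 0 → IsUnit a) {n : ℕ} {f : Fin n → A}
    {d : Fin n → ℕ} (hreg : IsRegSeq f) (hf : ∀ l, f l ∈ 𝒜 (d l)) (l : Fin n) : 1 ≤ d l := by
  by_contra! hl
  have hne : f l ≠ 0 := fun h => hreg.2 <| (Ideal.eq_top_iff_one _).mpr <|
    Ideal.span_mono (Set.image_subset_range f _) (hreg.1 l 1 (by simp [h]))
  exact hreg.2 (Ideal.eq_top_of_isUnit_mem _ (Ideal.subset_span ⟨l, rfl⟩)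
    (hunit _ (Nat.lt_one_iff.mp hl ▸ hf l) hne))

variable [AddSubmonoidClass S A] [GradedRing 𝒜]

theorem le_irrelevant_of_ne_top (hunit : ∀ a ∈ 𝒜 0, a ≠ 0 → IsUnit a) {I : Ideal A}
    (hI : I.IsHomogeneous 𝒜) (htop : I ≠ ⊤) : I ≤ 𝒜₊.toIdeal := by
  intro a ha
  rw [mem_irrelevant_iff_component]
  by_contra h0
  exact htop (I.eq_top_of_isUnit_mem (isStable_selfGrading_iff.mpr hI 0 a ha)
    (hunit _ (component_mem 𝒜 0 a) h0))

end GradedIdeal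

section PolynomialRing

open MvPolynomial
open scoped HomogeneousIdeal

attribute [local instance] MvPolynomial.gradedAlgebra

variable {σ K : Type*} [Field K]

theorem isUnit_of_mem_homogeneousSubmodule_zero (a : MvPolynomial σ K)
    (ha : a ∈ homogeneousSubmodule σ K 0) (hne : a ≠ 0) : IsUnit a := by
  rw [homogeneousSubmodule_zero] at ha
  obtain ⟨c, rfl⟩ := Submodule.mem_one.mp ha
  exact (IsUnit.mk0 c fun hc => hne (by rw [hc, map_zero])).map _

variable (σ K) in
theorem irrelevant_homogeneousSubmodule :
    (homogeneousSubmodule σ K)₊.toIdeal = idealOfVars σ K := by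
  refine le_antisymm ?_ (Ideal.span_le.mpr ?_)
  · rw [HomogeneousIdeal.irrelevant_eq_span, Ideal.span_le]
    simp only [Set.iUnion_subset_iff]
    intro i hi a ha
    rw [SetLike.mem_coe, ← pow_one (idealOfVars σ K), mem_pow_idealOfVars_iff]
    intro x hx
    exact hi.trans_eq (((mem_homogeneousSubmodule i a).mp ha).degree_eq_sum_deg_support hx)
  · rintro _ ⟨v, rfl⟩
    exact HomogeneousIdeal.mem_irrelevant_of_mem (homogeneousSubmodule σ K) one_pos
      (isHomogeneous_X K v)

theorem isRegSeq_X_comp {m : ℕ} {e : Fin m → σ} (he : Function.Injective e) :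
    IsRegSeq ((X : σ → MvPolynomial σ K) ∘ e) := by
  refine ⟨fun i a ha => ?_, ?_⟩
  · rw [Set.image_comp, mem_ideal_span_X_image] at ha ⊢
    intro c hc
    obtain ⟨v, hv, hcv⟩ := ha (c + Finsupp.single (e i) 1) (by
      rwa [mem_support_iff, Function.comp_apply, coeff_mul_X, ← mem_support_iff])
    refine ⟨v, hv, ?_⟩
    obtain ⟨j, hj, rfl⟩ := hv
    simpa [Finsupp.single_eq_of_ne (he.ne (Set.mem_ofPred.mp hj).ne)] using hcv
  · have hle : Ideal.span (Set.range (X ∘ e)) ≤ (homogeneousSubmodule σ K)₊.toIdeal :=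
      irrelevant_homogeneousSubmodule σ K ▸
        Ideal.span_mono (Set.range_comp_subset_range e X)
    exact fun htop => one_notMem_irrelevant (hle (htop ▸ Submodule.mem_top))

theorem exists_quotRegLE_mvPolynomial [Finite σ] {I : Ideal (MvPolynomial σ K)}
    (hI : I.IsHomogeneous (homogeneousSubmodule σ K)) :
    ∃ t, QuotRegLE (homogeneousSubmodule σ K) t I := by
  refine exists_quotRegLE_of_forall_subset (Set.range X) ?_ (fun J hJ hXJ => ?_) hI
  · rintro _ ⟨v, rfl⟩
    exact ⟨isHomogeneous_X K v, .of_ne_zero (X_ne_zero v)⟩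
  obtain rfl | htop := eq_or_ne J ⊤
  · exact ⟨0, quotRegLE_top⟩
  have hJX : J = idealOfVars σ K := (irrelevant_homogeneousSubmodule σ K ▸ le_irrelevant_of_ne_top
    isUnit_of_mem_homogeneousSubmodule_zero hJ htop).antisymm (Ideal.span_le.mpr hXJ)
  let e := (Finite.equivFin σ).symm
  have := (isRegSeq_X_comp (K := K) e.injective).hasQuotReg
    (𝒜 := homogeneousSubmodule σ K) (d := fun _ => 1) (fun l => isHomogeneous_X K (e l))
    fun _ => le_rfl
  rw [Set.range_comp, e.range_eq_univ, Set.image_univ] at this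
  rw [hJX]
  exact ⟨_, this.1⟩

theorem reg_powers_aci_linear_general {K σ : Type} [Field K] [Finite σ] {n : ℕ}
    {d : Fin (n + 1) → ℕ} {f : Fin (n + 1) → MvPolynomial σ K}
    (hhom : ∀ l, f l ∈ homogeneousSubmodule σ K (d l)) (hf : IsDSequence f)
    (hreg : IsRegSeq (f ∘ Fin.castSucc))
    (hregI : ∀ R : QuotResolution (homogeneousSubmodule σ K) (Ideal.span (Set.range f)),
      R.reg < (∑ l : Fin n, (d l.castSucc : ℤ)) - n)
    (hle : ∀ l, d l ≤ d (Fin.last n)) {s : ℕ} (hs : 2 ≤ s)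
    (R : QuotResolution (homogeneousSubmodule σ K) (Ideal.span (Set.range f) ^ s)) :
    R.reg = d (Fin.last n) * s + ((∑ l, (d l : ℤ)) - (n + 1) - 2 * d (Fin.last n)) := by
  have hunit := isUnit_of_mem_homogeneousSubmodule_zero (σ := σ) (K := K)
  have hpos (l : Fin n) : 1 ≤ d l.castSucc := hreg.one_le_degree hunit (fun l => hhom l.castSucc) l
  have hJ := hreg.hasQuotReg (fun l => hhom l.castSucc) hpos
  rw [← partialIdeal_self, partialIdeal_comp_castSucc f le_rfl] at hJ
  have hI := isHomogeneous_span_range hhom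
  obtain ⟨t, ht⟩ := exists_quotRegLE_mvPolynomial hI
  obtain ⟨RI⟩ := QuotResolution.nonempty hunit hI
  have hlt : RI.reg < ∑ l : Fin n, ((d l.castSucc : ℤ) - 1) := by simpa using hregI RI
  have hlast : 1 ≤ d (Fin.last n) := by
    cases n with
    | zero => exact absurd hlt (by simpa using RI.reg_nonneg ht)
    | succ n => exact (hpos 0).trans (hle _)
  obtain ⟨s, rfl⟩ := Nat.exists_eq_add_of_le' hs
  have hcolon (i : Fin n) :
      (partialIdeal f i.castSucc).colon {f i.castSucc} = partialIdeal f i.castSucc := by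
    simpa [partialIdeal_comp_castSucc f i.2.le] using hreg.colon_partialIdeal i
  rw [R.reg_eq (hf.hasQuotReg_pow hhom hle hcolon hlast hJ
    ((RI.quotRegLE_reg ht).mono (by lia)) s), Fin.sum_univ_castSucc, Finset.sum_sub_distrib]
  simp only [Finset.sum_const, Finset.card_univ, Fintype.card_fin, nsmul_one]
  push_cast
  ring

end PolynomialRing

/-- Asymptotic linearity of regularity of powers of an almost complete intersection:
under the hypotheses of Theorem 2.4 with `d_1 ≤ … ≤ d_n` (indexed here by `Fin (n+1)`),
for every `s ≥ 2` (hence for `s ≫ 0`)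
`reg (A/I^s) = d_n · s + ((∑ d_l) - n - 2 d_n)`, a linear function of `s` with leading
coefficient `d_n`. -/
theorem reg_powers_aci_linear (K : Type) [Field K] [Infinite K] (m n : ℕ)
    (d : Fin (n + 1) → ℕ) (f : Fin (n + 1) → MvPolynomial (Fin m) K)
    (I : Ideal (MvPolynomial (Fin m) K)) (hACI : IsACI I)
    (hhom : ∀ l, f l ∈ MvPolynomial.homogeneousSubmodule (Fin m) K (d l))
    (hI : I = Ideal.span (Set.range f))
    (hd : IsDSequence f) (hrs : IsRegSeq (f ∘ Fin.castSucc))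
    (hregI : ∀ RI : MinGradedFreeRes K (MvPolynomial (Fin m) K)
        (zg (MvPolynomial.homogeneousSubmodule (Fin m) K))
        (irrel (MvPolynomial.homogeneousSubmodule (Fin m) K))
        (MvPolynomial (Fin m) K ⧸ I)
        (quotPieces (MvPolynomial.homogeneousSubmodule (Fin m) K) I),
      RI.reg < (∑ l : Fin n, (d (Fin.castSucc l) : ℤ)) - (n : ℤ))
    (hmono : Monotone d) :
    ∀ s : ℕ, 2 ≤ s →
    ∀ R : MinGradedFreeRes K (MvPolynomial (Fin m) K)
        (zg (MvPolynomial.homogeneousSubmodule (Fin m) K))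
        (irrel (MvPolynomial.homogeneousSubmodule (Fin m) K))
        (MvPolynomial (Fin m) K ⧸ (I ^ s))
        (quotPieces (MvPolynomial.homogeneousSubmodule (Fin m) K) (I ^ s)),
      R.reg = (d (Fin.last n) : ℤ) * (s : ℤ)
        + ((∑ l, (d l : ℤ)) - ((n : ℤ) + 1) - 2 * (d (Fin.last n) : ℤ)) := by
  subst hI
  exact fun s hs => reg_powers_aci_linear_general hhom hd hrs hregI (fun l => hmono l.le_last) hs
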